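/- arXiv:2211.08973 — 4 statements merged into one kernel-verified Lean document; each statement's English description precedes it below -/
import Mathlib

section
/- Assume the Riemann Hypothesis is false, and let Θ ∈ (1/2,1] be the supremum of the real parts of the non-trivial zeros of ζ. Fix σ₀ ∈ (1−Θ, Θ) and ε > 0. There exist sequences x_n → ∞, y_n → ∞ and positive reals δ_n → 0 such that for all n: (log x_n)^{1/(1−σ₀)−δ_n} ≤ y_n ≤ (log x_n)^{1/(1−σ₀)+δ_n} and Ψ(x_n, y_n) < x_n · ρ(log x_n / log y_n) · exp(−y_n^{Θ−σ₀−ε}). -/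
open Real Filter

/-- `Psi x y` is the number of `y`-friable integers up to `x`. -/
noncomputable def Psi (x y : ℝ) : ℕ :=
  Set.ncard {n : ℕ | 1 ≤ n ∧ (n : ℝ) ≤ x ∧ ∀ p : ℕ, p.Prime → p ∣ n → (p : ℝ) ≤ y}

/-- `Θ`, the supremum of the real parts of the nontrivial zeros of `ζ`. -/
noncomputable def Theta : ℝ :=
  sSup (Complex.re '' {z : ℂ | riemannZeta z = 0 ∧ 0 < z.re ∧ z.re < 1})

/-!
Rankin's bound gives `Ψ(x, y) ≤ x^σ ζ(σ, y)`, where `ζ(σ, y) = ∏_{p ≤ y} (1 - p^(-σ))⁻¹`. With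
`I(ξ) = ∫₀^ξ (e^t - 1) / t dt` and `ξ = (1 - σ) log y`, the exponential moment
`∫ ρ(v) e^(ξv) dv` is a constant times `e^(I(ξ))` and concentrates around `v ≈ e^ξ / ξ`, so that
`ρ(v) e^(ξv)` is at least `e^(I(ξ))`, up to a factor of lower order, for some such `v`. Taking
`x = y^v`, it is enough that `log ζ(σ, y) < I((1 - σ) log y) - y^β` for arbitrarily large `y`.

This is Landau's oscillation theorem: the transform `s ↦ ∫₁^∞ (log ζ(σ, y) - I) y^(-s-1) dy` equals
`log ((s + σ - 1) ζ(s + σ) / s) / s` up to an analytic term. If the difference were bounded below by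
`-y^β`, the transform would be analytic in `β < re s`, whereas a zero `z` of `ζ` with
`β + σ < re z` gives it a singularity at `z - σ`.
-/

section FriableDeficit

open MeasureTheory ProbabilityTheory Set Topology

lemma frequently_nhdsNE_ofReal {P : ℂ → Prop} {c : ℝ} (h : ∀ᶠ s : ℝ in 𝓝 c, P s) :
    ∃ᶠ z in 𝓝[≠] (c : ℂ), P z := by
  have ofReal_punctured : Tendsto Complex.ofReal (𝓝[≠] c) (𝓝[≠] (c : ℂ)) :=
    Complex.continuous_ofReal.continuousAt.continuousWithinAt.tendsto_nhdsWithin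
      fun s hs => by simpa using hs
  exact ofReal_punctured.frequently (h.filter_mono nhdsWithin_le_nhds).frequently

section NonposMGF

variable {Ω : Type*} {mΩ : MeasurableSpace Ω} {X : Ω → ℝ} {μ : Measure Ω} {c h : ℝ}

lemma isUpperSet_integrableExpSet_of_nonpos (hXm : AEMeasurable X μ) (hX : ∀ᵐ ω ∂μ, X ω ≤ 0) :
    IsUpperSet (integrableExpSet X μ) := by
  intro a b hab ha
  refine Integrable.mono' (g := fun ω => rexp (a * X ω)) ha (by fun_prop) ?_
  filter_upwards [hX] with ω hω
  rw [Real.norm_of_nonneg (exp_pos _).le, exp_le_exp]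
  exact mul_le_mul_of_nonpos_right hab hω

lemma Ioi_sInf_subset_interior_of_isUpperSet {S : Set ℝ} (hS : IsUpperSet S)
    (hne : S.Nonempty) : Ioi (sInf S) ⊆ interior S := by
  refine interior_maximal (fun x hx => ?_) isOpen_Ioi
  obtain ⟨y, hy, hyx⟩ := exists_lt_of_csInf_lt hne hx
  exact hS hyx.le hy

lemma sub_mem_integrableExpSet_of_summable_moments (hXm : AEMeasurable X μ)
    (hX : ∀ᵐ ω ∂μ, X ω ≤ 0) (hc : c ∈ interior (integrableExpSet X μ)) (hh : 0 ≤ h)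
    (hsum : Summable fun n : ℕ => (-h) ^ n / n.factorial * ∫ ω, X ω ^ n * rexp (c * X ω) ∂μ) :
    c - h ∈ integrableExpSet X μ := by
  let term (n : ℕ) (ω : Ω) : ℝ := (-h) ^ n / n.factorial * (X ω ^ n * rexp (c * X ω))
  have term_integrable (n : ℕ) : Integrable (term n) μ :=
    (integrable_pow_mul_exp_of_mem_interior_integrableExpSet hc n).const_mul _
  have term_eq (n : ℕ) (ω : Ω) :
      term n ω = (-h * X ω) ^ n / n.factorial * rexp (c * X ω) := by
    simp only [term, mul_pow]; ring
  have term_nonneg : ∀ᵐ ω ∂μ, ∀ n, 0 ≤ term n ω := by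
    filter_upwards [hX] with ω hω n
    have : 0 ≤ -h * X ω := mul_nonneg_of_nonpos_of_nonpos (neg_nonpos.2 hh) hω
    rw [term_eq]; positivity
  have hasSum_term (ω : Ω) : HasSum (term · ω) (rexp ((c - h) * X ω)) := by
    have hexp := (NormedSpace.expSeries_div_hasSum_exp (𝔸 := ℝ) (-h * X ω)).mul_right
      (rexp (c * X ω))
    rw [← Real.exp_eq_exp_ℝ, ← Real.exp_add, ← add_mul, neg_add_eq_sub] at hexp
    simpa only [term_eq] using hexp
  refine ⟨by fun_prop, ?_⟩
  rw [hasFiniteIntegral_iff_ofReal (.of_forall fun ω => (exp_pos _).le)]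
  calc ∫⁻ ω, ENNReal.ofReal (rexp ((c - h) * X ω)) ∂μ
      = ∫⁻ ω, ∑' n, ENNReal.ofReal (term n ω) ∂μ := by
        refine lintegral_congr_ae ?_
        filter_upwards [term_nonneg] with ω hω
        rw [← ENNReal.ofReal_tsum_of_nonneg hω (hasSum_term ω).summable, (hasSum_term ω).tsum_eq]
    _ = ∑' n, ENNReal.ofReal (∫ ω, term n ω ∂μ) := by
        rw [lintegral_tsum fun n => (term_integrable n).aemeasurable.ennreal_ofReal]
        refine tsum_congr fun n => (ofReal_integral_eq_lintegral_ofReal (term_integrable n) ?_).symm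
        filter_upwards [term_nonneg] with ω hω using hω n
    _ < ⊤ := by
        simp only [term, integral_const_mul]
        exact hsum.tsum_ofReal_lt_top

lemma sub_mem_integrableExpSet_of_differentiableOn_ball (hXm : AEMeasurable X μ)
    (hX : ∀ᵐ ω ∂μ, X ω ≤ 0) (hc : c ∈ interior (integrableExpSet X μ)) {G : ℂ → ℂ} {R : ℝ}
    (hG : DifferentiableOn ℂ G (Metric.ball (c : ℂ) R)) (hGX : G =ᶠ[𝓝 (c : ℂ)] complexMGF X μ)
    (hh : 0 ≤ h) (hhR : h < R) : c - h ∈ integrableExpSet X μ := by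
  refine sub_mem_integrableExpSet_of_summable_moments hXm hX hc hh ?_
  have hmem : ((c - h : ℝ) : ℂ) ∈ Metric.ball (c : ℂ) R := by
    simpa [Complex.dist_eq, abs_of_nonneg hh] using hhR
  refine Complex.summable_ofReal.1
    ((Complex.hasSum_taylorSeries_on_ball hG hmem).summable.congr fun n => ?_)
  rw [hGX.iteratedDeriv_eq n, iteratedDeriv_complexMGF (by simpa using hc), Complex.ofReal_mul,
    ← integral_complex_ofReal]
  push_cast
  simp only [smul_eq_mul]
  ring_nf

lemma eventuallyEq_complexMGF_of_eqOn_real {G : ℂ → ℂ} {a s₁ : ℝ}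
    (ha : Ioi a ⊆ interior (integrableExpSet X μ)) (hG : ∀ x : ℝ, a < x → AnalyticAt ℂ G x)
    (hGX : ∀ s : ℝ, s₁ < s → G s = complexMGF X μ s) {x : ℝ} (hx : a < x) :
    G =ᶠ[𝓝 (x : ℂ)] complexMGF X μ := by
  have analytic_mgf {x : ℝ} (hx : a < x) : AnalyticAt ℂ (complexMGF X μ) x :=
    analyticAt_complexMGF (by simpa using ha hx)
  have agree : EqOn G (complexMGF X μ) (Complex.ofReal '' Ioi a) := by
    obtain ⟨x₀, hx₀⟩ := exists_gt (max a s₁)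
    refine AnalyticOnNhd.eqOn_of_preconnected_of_frequently_eq
      (by rintro _ ⟨x, hx, rfl⟩; exact hG x hx)
      (by rintro _ ⟨x, hx, rfl⟩; exact analytic_mgf hx)
      (isPreconnected_Ioi.image _ Complex.continuous_ofReal.continuousOn)
      ⟨x₀, (le_max_left _ _).trans_lt hx₀, rfl⟩ (frequently_nhdsNE_ofReal ?_)
    filter_upwards [Ioi_mem_nhds ((le_max_right _ _).trans_lt hx₀)] with x hx using hGX x hx
  refine ((hG x hx).frequently_eq_iff_eventually_eq (analytic_mgf hx)).1
    (frequently_nhdsNE_ofReal ?_)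
  filter_upwards [Ioi_mem_nhds hx] with x hx using agree ⟨x, hx, rfl⟩

/-- Landau's argument: expand at a point just to the right of the abscissa of convergence `σ`. All
terms of the Taylor series at a point to the left of `σ` are nonnegative, so convergence of the
series gives integrability there. -/
lemma Ioi_subset_integrableExpSet_of_differentiableOn (hXm : AEMeasurable X μ)
    (hX : ∀ᵐ ω ∂μ, X ω ≤ 0) (hne : (integrableExpSet X μ).Nonempty) {β s₁ : ℝ} {U : Set ℂ}
    (hUo : IsOpen U) (hU : ∀ s : ℝ, β < s → (s : ℂ) ∈ U) {G : ℂ → ℂ}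
    (hG : DifferentiableOn ℂ G U) (hGX : ∀ s : ℝ, s₁ < s → G s = complexMGF X μ s) :
    Ioi β ⊆ integrableExpSet X μ := by
  set S := integrableExpSet X μ
  have hS : IsUpperSet S := isUpperSet_integrableExpSet_of_nonpos hXm hX
  intro s (hs : β < s)
  by_contra hsS
  have lower {x : ℝ} (hx : x ∈ S) : s ≤ x := le_of_not_ge fun h => hsS (hS h hx)
  set σ := sInf S
  have hβσ : β < σ := hs.trans_le (le_csInf hne fun x => lower)
  have hint : Ioi σ ⊆ interior S := Ioi_sInf_subset_interior_of_isUpperSet hS hne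
  obtain ⟨r, hr, hball⟩ := Metric.isOpen_iff.1 hUo (σ : ℂ) (hU σ hβσ)
  have hc : σ < σ + r / 4 := by linarith
  have ball_subset : Metric.ball ((σ + r / 4 : ℝ) : ℂ) (r / 2) ⊆ U := by
    refine (Metric.ball_subset_ball' ?_).trans hball
    rw [Complex.dist_eq, ← Complex.ofReal_sub, add_sub_cancel_left, Complex.norm_real,
      Real.norm_of_nonneg (by positivity)]
    linarith
  have agree_near : G =ᶠ[𝓝 ((σ + r / 4 : ℝ) : ℂ)] complexMGF X μ :=
    eventuallyEq_complexMGF_of_eqOn_real hint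
      (fun x hx => hG.analyticAt (hUo.mem_nhds (hU x (hβσ.trans hx)))) hGX hc
  have : σ + r / 4 - 3 * r / 8 ∈ S := sub_mem_integrableExpSet_of_differentiableOn_ball hXm hX
    (hint hc) (hG.mono ball_subset) agree_near (by positivity) (by linarith)
  linarith [csInf_le ⟨s, fun x => lower⟩ this]

end NonposMGF

section TailMellin

/-- The Mellin-type transform `∫₁^∞ f(y) y^(-s-1) dy` of `f` converges absolutely and equals `m`.
Compared with `HasMellin`, the integral starts at `1` and `s` is real with the opposite sign. -/
def HasTailMellin (f : ℝ → ℝ) (s m : ℝ) : Prop :=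
  IntegrableOn (fun y => f y * y ^ (-(s + 1))) (Ioi 1) ∧ ∫ y in Ioi 1, f y * y ^ (-(s + 1)) = m

variable {f g : ℝ → ℝ} {s m m' C β : ℝ}

lemma HasTailMellin.add (hf : HasTailMellin f s m) (hg : HasTailMellin g s m') :
    HasTailMellin (fun y => f y + g y) s (m + m') := by
  simp only [HasTailMellin, add_mul]
  exact ⟨hf.1.add hg.1, by rw [integral_add hf.1 hg.1, hf.2, hg.2]⟩

lemma HasTailMellin.const_mul (hf : HasTailMellin f s m) (c : ℝ) :
    HasTailMellin (fun y => c * f y) s (c * m) := by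
  simp only [HasTailMellin, mul_assoc]
  exact ⟨hf.1.const_mul c, by rw [integral_const_mul, hf.2]⟩

lemma HasTailMellin.sub (hf : HasTailMellin f s m) (hg : HasTailMellin g s m') :
    HasTailMellin (fun y => f y - g y) s (m - m') := by
  simpa only [neg_one_mul, ← sub_eq_add_neg] using hf.add (hg.const_mul (-1))

lemma HasTailMellin.congr (hf : HasTailMellin f s m) (hfg : EqOn f g (Ioi 1)) :
    HasTailMellin g s m := by
  have hfg' : EqOn (fun y => f y * y ^ (-(s + 1))) (fun y => g y * y ^ (-(s + 1))) (Ioi 1) :=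
    fun y hy => by simp only [hfg hy]
  exact ⟨hf.1.congr_fun hfg' measurableSet_Ioi,
    by rw [← setIntegral_congr_fun measurableSet_Ioi hfg', hf.2]⟩

lemma HasTailMellin.unique (hf : HasTailMellin f s m) (hf' : HasTailMellin f s m') : m = m' :=
  hf.2.symm.trans hf'.2

lemma HasTailMellin.nonneg (hm : HasTailMellin f s m) (hf : ∀ y > 1, 0 ≤ f y) : 0 ≤ m := by
  rw [← hm.2]
  exact setIntegral_nonneg measurableSet_Ioi fun y hy =>
    mul_nonneg (hf y hy) (Real.rpow_nonneg (zero_lt_one.trans hy).le _)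

lemma hasTailMellin_rpow (hβ : β < s) : HasTailMellin (fun y => y ^ β) s (1 / (s - β)) := by
  have hexp : EqOn (fun y : ℝ => y ^ β * y ^ (-(s + 1))) (fun y => y ^ (β - s - 1)) (Ioi 1) :=
    fun y hy => by
      simp only [← Real.rpow_add (zero_lt_one.trans hy)]
      ring_nf
  have hlt : β - s - 1 < -1 := by linarith
  refine ⟨(integrableOn_Ioi_rpow_of_lt hlt zero_lt_one).congr_fun hexp.symm measurableSet_Ioi, ?_⟩
  rw [setIntegral_congr_fun measurableSet_Ioi hexp, integral_Ioi_rpow_of_lt hlt zero_lt_one,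
    sub_add_cancel, Real.one_rpow, ← neg_sub s β, neg_div_neg_eq]

lemma hasTailMellin_of_abs_le_rpow (hfm : Measurable f) (hf : ∀ y > 1, |f y| ≤ C * y ^ β)
    (hβ : β < s) : HasTailMellin f s (∫ y in Ioi 1, f y * y ^ (-(s + 1))) := by
  refine ⟨Integrable.mono' ((hasTailMellin_rpow hβ).const_mul C).1
    (Measurable.aestronglyMeasurable (by fun_prop)) ?_, rfl⟩
  filter_upwards [ae_restrict_mem measurableSet_Ioi] with y hy
  have hy0 : 0 ≤ y ^ (-(s + 1)) := Real.rpow_nonneg (zero_lt_one.trans hy).le _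
  rw [norm_mul, Real.norm_eq_abs, Real.norm_of_nonneg hy0]
  exact mul_le_mul_of_nonneg_right (hf y hy) hy0

lemma rpow_neg_add_one_eq_inv_mul_exp {y : ℝ} (hy : 0 < y) :
    y ^ (-(s + 1)) = y⁻¹ * rexp (s * -Real.log y) := by
  rw [neg_add, Real.rpow_add hy, Real.rpow_neg_one, mul_comm, Real.rpow_def_of_pos hy]
  ring_nf

/-- The image of the measure `tailMeasure f` under `y ↦ -log y` has the transform
`∫₁^∞ f(y) y^(-s-1) dy` as its moment generating function, if `0 ≤ f`. -/
noncomputable def tailMeasure (f : ℝ → ℝ) : Measure ℝ :=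
  (volume.restrict (Ioi 1)).withDensity fun y => ENNReal.ofReal (f y * y⁻¹)

lemma ae_tailMeasure_neg_log_nonpos : ∀ᵐ y ∂tailMeasure f, -Real.log y ≤ 0 := by
  refine (withDensity_absolutelyContinuous _ _).ae_le ?_
  filter_upwards [ae_restrict_mem measurableSet_Ioi] with y hy
  exact neg_nonpos.2 (Real.log_nonneg (le_of_lt hy))

lemma HasTailMellin.mgf_tailMeasure (hfm : Measurable f) (hf : ∀ y > 1, 0 ≤ f y)
    (hm : HasTailMellin f s m) :
    s ∈ integrableExpSet (fun y => -Real.log y) (tailMeasure f) ∧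
      mgf (fun y => -Real.log y) (tailMeasure f) s = m := by
  have hdens : Measurable fun y => ENNReal.ofReal (f y * y⁻¹) := by fun_prop
  have hexp : EqOn (fun y => f y * y ^ (-(s + 1)))
      (fun y => (ENNReal.ofReal (f y * y⁻¹)).toReal • rexp (s * -Real.log y)) (Ioi 1) := by
    intro y hy
    have hy0 : 0 < y := zero_lt_one.trans hy
    simp only [smul_eq_mul]
    rw [ENNReal.toReal_ofReal (mul_nonneg (hf y hy) (inv_nonneg.2 hy0.le)), mul_assoc,
      rpow_neg_add_one_eq_inv_mul_exp hy0]
  constructor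
  · rw [integrableExpSet, mem_ofPred_eq, tailMeasure,
      integrable_withDensity_iff_integrable_smul' hdens (by simp)]
    exact hm.1.congr_fun hexp measurableSet_Ioi
  · rw [mgf, tailMeasure, integral_withDensity_eq_integral_toReal_smul hdens (by simp),
      ← setIntegral_congr_fun measurableSet_Ioi hexp, hm.2]

lemma isOpen_setOf_lt_re (β : ℝ) : IsOpen {s : ℂ | β < s.re} :=
  isOpen_lt continuous_const Complex.continuous_re

lemma exists_differentiableOn_extension_of_nonneg {s₁ : ℝ} (hfm : Measurable f)
    (hf : ∀ y > 1, 0 ≤ f y) {U : Set ℂ} (hUo : IsOpen U) (hU : ∀ s : ℝ, β < s → (s : ℂ) ∈ U)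
    {G : ℂ → ℂ} (hG : DifferentiableOn ℂ G U)
    (hGf : ∀ s : ℝ, s₁ < s → ∃ m : ℝ, HasTailMellin f s m ∧ G s = m) :
    ∃ F : ℂ → ℂ, DifferentiableOn ℂ F {s | β < s.re} ∧ ∀ s : ℝ, s₁ < s → F s = G s := by
  have integrable_and_eq (s : ℝ) (hs : s₁ < s) :
      s ∈ integrableExpSet (fun y => -Real.log y) (tailMeasure f) ∧
        complexMGF (fun y => -Real.log y) (tailMeasure f) s = G s := by
    obtain ⟨m, hm, hGm⟩ := hGf s hs
    have hmgf := hm.mgf_tailMeasure hfm hf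
    exact ⟨hmgf.1, by rw [complexMGF_ofReal, hmgf.2, hGm]⟩
  refine ⟨complexMGF (fun y => -Real.log y) (tailMeasure f), ?_,
    fun s hs => (integrable_and_eq s hs).2⟩
  have integrable : Ioi β ⊆ integrableExpSet (fun y => -Real.log y) (tailMeasure f) :=
    Ioi_subset_integrableExpSet_of_differentiableOn (by fun_prop) ae_tailMeasure_neg_log_nonpos
      ⟨s₁ + 1, (integrable_and_eq _ (lt_add_one s₁)).1⟩ hUo hU hG
      fun s hs => (integrable_and_eq s hs).2.symm
  exact differentiableOn_complexMGF.mono fun s hs => interior_maximal integrable isOpen_Ioi hs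

lemma exists_differentiableOn_extension_of_neg_rpow_le {s₁ : ℝ} (hfm : Measurable f)
    (hf : ∀ y > 1, -(C * y ^ β) ≤ f y) (hβ : β ≤ s₁) {U : Set ℂ} (hUo : IsOpen U)
    (hU : ∀ s : ℝ, β < s → (s : ℂ) ∈ U) {G : ℂ → ℂ} (hG : DifferentiableOn ℂ G U)
    (hGf : ∀ s : ℝ, s₁ < s → ∃ m : ℝ, HasTailMellin f s m ∧ G s = m) :
    ∃ F : ℂ → ℂ, DifferentiableOn ℂ F {s | β < s.re} ∧ ∀ s : ℝ, s₁ < s → F s = G s := by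
  have pole : DifferentiableOn ℂ (fun s : ℂ => C * (1 / (s - β))) {s | β < s.re} := by
    refine fun s hs => ((differentiableAt_const _).div (by fun_prop) ?_).const_mul _
      |>.differentiableWithinAt
    rintro h
    simp [sub_eq_zero.1 h] at hs
  obtain ⟨F, hF, hFG⟩ := exists_differentiableOn_extension_of_nonneg (β := β) (s₁ := s₁)
    (f := fun y => f y + C * y ^ β) (G := fun s => G s + C * (1 / (s - β)))
    (by fun_prop) (fun y hy => by linarith [hf y hy]) (hUo.inter (isOpen_setOf_lt_re β))
    (fun s hs => ⟨hU s hs, by simpa using hs⟩)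
    ((hG.mono inter_subset_left).add (pole.mono inter_subset_right)) fun s hs => by
      obtain ⟨m, hm, hGm⟩ := hGf s hs
      exact ⟨_, hm.add ((hasTailMellin_rpow (hβ.trans_lt hs)).const_mul C), by simp [hGm]⟩
  exact ⟨fun s => F s - C * (1 / (s - β)), hF.sub pole, fun s hs => by simp [hFG s hs]⟩

end TailMellin

section ZetaRealAxis

lemma exists_hasTailMellin_partialSum {a : ℕ → ℝ} (ha : ∀ n, 0 ≤ a n) {C r s : ℝ} (hr : 0 ≤ r)
    (hC : ∀ n : ℕ, ∑ k ∈ Finset.Icc 1 n, a k ≤ C * (n : ℝ) ^ r) (hs : r < s) :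
    ∃ m, HasTailMellin (fun y => ∑ k ∈ Finset.Icc 1 ⌊y⌋₊, a k) s m ∧
      LSeries (fun n => (a n : ℂ)) s = s * m := by
  have partialSum_nonneg (n : ℕ) : 0 ≤ ∑ k ∈ Finset.Icc 1 n, a k :=
    Finset.sum_nonneg fun k _ => ha k
  have hC0 : 0 ≤ C := by simpa using (partialSum_nonneg 1).trans (hC 1)
  have partialSum_measurable : Measurable fun y : ℝ => ∑ k ∈ Finset.Icc 1 ⌊y⌋₊, a k :=
    (measurable_from_nat (f := fun n => ∑ k ∈ Finset.Icc 1 n, a k)).comp Nat.measurable_floor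
  refine ⟨_, hasTailMellin_of_abs_le_rpow (C := C) partialSum_measurable (fun y hy => ?_) hs, ?_⟩
  · rw [abs_of_nonneg (partialSum_nonneg _)]
    refine (hC _).trans ?_
    gcongr
    exact Nat.floor_le (zero_lt_one.trans hy).le
  · rw [LSeries_eq_mul_integral_of_nonneg a hr (by simpa using hs)
      (.of_bound C (.of_forall fun n => ?_)) ha, ← integral_complex_ofReal]
    · congr 1
      refine setIntegral_congr_fun measurableSet_Ioi fun y hy => ?_
      have hy0 : (0 : ℝ) ≤ y := (zero_lt_one.trans hy).le
      simp only [Complex.ofReal_mul, Complex.ofReal_sum, Complex.ofReal_cpow hy0,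
        Complex.ofReal_neg, Complex.ofReal_add, Complex.ofReal_one]
    · rw [Real.norm_of_nonneg (partialSum_nonneg n), Real.norm_of_nonneg (by positivity)]
      exact hC n

/-- The analytic function `s ↦ ∫₁^∞ {y} y^(-s-1) dy` on `0 < re s`. -/
noncomputable def fractTransform : ℂ → ℂ :=
  complexMGF (fun y => -Real.log y) (tailMeasure Int.fract)

lemma exists_hasTailMellin_fract {s : ℝ} (hs : 0 < s) :
    ∃ m, HasTailMellin Int.fract s m ∧
      s ∈ integrableExpSet (fun y => -Real.log y) (tailMeasure Int.fract) ∧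
      fractTransform s = m := by
  have hm := hasTailMellin_of_abs_le_rpow (f := Int.fract) (C := 1) (β := 0) measurable_fract
    (fun y _ => by simpa [Int.abs_fract] using (Int.fract_lt_one y).le) hs
  have hmgf := hm.mgf_tailMeasure measurable_fract fun y _ => Int.fract_nonneg y
  exact ⟨_, hm, hmgf.1, by rw [fractTransform, complexMGF_ofReal, hmgf.2]⟩

lemma riemannZeta₁_ofReal_eq_of_one_lt {s : ℝ} (hs : 1 < s) :
    riemannZeta₁ s = s - s * (s - 1) * fractTransform s := by
  obtain ⟨m, hm, -, hfract⟩ := exists_hasTailMellin_fract (zero_lt_one.trans hs)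
  obtain ⟨k, hk, hζ⟩ := exists_hasTailMellin_partialSum (a := fun _ => 1) (C := 1) (r := 1)
    (fun _ => zero_le_one) zero_le_one (by simp) hs
  have hfloor : k = 1 / (s - 1) - m := by
    refine hk.unique (((hasTailMellin_rpow hs).sub hm).congr fun y hy => ?_)
    have hy0 : (0 : ℝ) ≤ y := (zero_lt_one.trans hy).le
    simp [Int.fract.eq_1, -Int.self_sub_floor, natCast_floor_eq_intCast_floor hy0]
  have hs1 : (s : ℂ) - 1 ≠ 0 := by exact_mod_cast sub_ne_zero.2 hs.ne'
  have hζ' : riemannZeta s = s * k := by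
    rw [← hζ, ← LSeries_one_eq_riemannZeta (by simpa using hs)]
    simp [Pi.one_def]
  rw [riemannZeta_eq_inv_sub_mul (sub_ne_zero.1 hs1), inv_mul_eq_iff_eq_mul₀ hs1] at hζ'
  rw [hζ', hfract, hfloor]
  push_cast
  field_simp

lemma riemannZeta₁_eq_of_re_pos : EqOn riemannZeta₁
    (fun s => s - s * (s - 1) * fractTransform s) {s | 0 < s.re} := by
  have hsub : Ioi 0 ⊆ interior (integrableExpSet (fun y => -Real.log y) (tailMeasure Int.fract)) :=
    interior_maximal (fun s hs => (exists_hasTailMellin_fract hs).choose_spec.2.1) isOpen_Ioi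
  have hfract : DifferentiableOn ℂ fractTransform {s | 0 < s.re} :=
    differentiableOn_complexMGF.mono fun s hs => hsub hs
  refine AnalyticOnNhd.eqOn_of_preconnected_of_frequently_eq (z₀ := ((2 : ℝ) : ℂ))
    (differentiable_riemannZeta₁.differentiableOn.analyticOnNhd (isOpen_setOf_lt_re 0))
    (DifferentiableOn.analyticOnNhd (by fun_prop) (isOpen_setOf_lt_re 0))
    (convex_halfSpace_re_gt 0).isPreconnected (by simp) (frequently_nhdsNE_ofReal ?_)
  filter_upwards [Ioi_mem_nhds one_lt_two] with s hs using riemannZeta₁_ofReal_eq_of_one_lt hs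

lemma exists_pos_riemannZeta₁_ofReal {s : ℝ} (hs : 0 < s) :
    ∃ r : ℝ, 0 < r ∧ riemannZeta₁ s = r := by
  obtain ⟨m, hm, -, hfract⟩ := exists_hasTailMellin_fract hs
  have hm0 : 0 ≤ m := hm.nonneg fun y _ => Int.fract_nonneg y
  have hm1 : m ≤ 1 / s := by
    simpa using ((hasTailMellin_rpow (β := 0) hs).sub hm).nonneg fun y _ => by
      simpa using (Int.fract_lt_one y).le
  refine ⟨s - s * (s - 1) * m, ?_, ?_⟩
  · rw [le_div_iff₀ hs] at hm1
    rcases le_total s 1 with h | h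
    · nlinarith [mul_nonneg hs.le hm0]
    · nlinarith
  · rw [riemannZeta₁_eq_of_re_pos (show (s : ℂ) ∈ {s | 0 < s.re} by simpa using hs)]
    simp [hfract]

end ZetaRealAxis

section EulerFactors

variable {σ β s : ℝ} {p : ℕ}

/-- The logarithm of the Euler factor at `p` of `ζ(σ)`. -/
noncomputable def logEulerFactor (σ : ℝ) (p : ℕ) : ℝ := -Real.log (1 - (p : ℝ) ^ (-σ))

lemma prime_rpow_neg_le (hσ : 0 < σ) (hp : p.Prime) : (p : ℝ) ^ (-σ) ≤ 2 ^ (-σ) :=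
  Real.rpow_le_rpow_of_nonpos two_pos (by exact_mod_cast hp.two_le) (neg_nonpos.2 hσ.le)

lemma two_rpow_neg_lt_one (hσ : 0 < σ) : (2 : ℝ) ^ (-σ) < 1 :=
  Real.rpow_lt_one_of_one_lt_of_neg one_lt_two (neg_lt_zero.2 hσ)

lemma prime_rpow_neg_lt_one (hσ : 0 < σ) (hp : p.Prime) : (p : ℝ) ^ (-σ) < 1 :=
  (prime_rpow_neg_le hσ hp).trans_lt (two_rpow_neg_lt_one hσ)

lemma logEulerFactor_nonneg (hσ : 0 < σ) (hp : p.Prime) : 0 ≤ logEulerFactor σ p :=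
  neg_nonneg.2 (Real.log_nonpos (sub_nonneg.2 (prime_rpow_neg_lt_one hσ hp).le)
    (sub_le_self _ (by positivity)))

lemma logEulerFactor_le_two (hσ : 0 < σ) (hp : p.Prime) :
    logEulerFactor σ p ≤ logEulerFactor σ 2 :=
  neg_le_neg (Real.log_le_log (sub_pos.2 (by exact_mod_cast two_rpow_neg_lt_one hσ))
    (sub_le_sub_left (by exact_mod_cast prime_rpow_neg_le hσ hp) _))

lemma ofReal_logEulerFactor (hσ : 0 < σ) (hp : p.Prime) :
    (logEulerFactor σ p : ℂ) = -Complex.log (1 - (p : ℂ) ^ (-(σ : ℂ))) := by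
  rw [logEulerFactor, Complex.ofReal_neg,
    Complex.ofReal_log (sub_nonneg.2 (prime_rpow_neg_lt_one hσ hp).le), Complex.ofReal_sub,
    Complex.ofReal_cpow p.cast_nonneg]
  simp

lemma tsum_neg_log_one_sub_eq_log_riemannZeta (hs : 1 < s) :
    ∑' p : Nat.Primes, -Complex.log (1 - (p : ℂ) ^ (-(s : ℂ))) = Complex.log (riemannZeta s) := by
  have hreal : ∑' p : Nat.Primes, -Complex.log (1 - (p : ℂ) ^ (-(s : ℂ))) =
      (∑' p : Nat.Primes, logEulerFactor s p : ℝ) := by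
    rw [Complex.ofReal_tsum]
    exact tsum_congr fun p => (ofReal_logEulerFactor (zero_lt_one.trans hs) p.2).symm
  rw [← riemannZeta_eulerProduct_exp_log (by simpa using hs), hreal, ← Complex.ofReal_exp,
    ← Complex.ofReal_log (exp_pos _).le, Real.log_exp]

lemma norm_log_one_sub_add_self_le {q : ℝ} (hq : q < 1) {z : ℂ} (hz : ‖z‖ ≤ q) :
    ‖Complex.log (1 - z) + z‖ ≤ (1 - q)⁻¹ * ‖z‖ ^ 2 := by
  have h := Complex.norm_log_one_add_sub_self_le (z := -z) (by rw [norm_neg]; linarith)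
  rw [norm_neg, sub_neg_eq_add, ← sub_eq_add_neg] at h
  have hq' : (1 - ‖z‖)⁻¹ ≤ (1 - q)⁻¹ := inv_anti₀ (by linarith) (by linarith)
  have hq0 : 0 ≤ (1 - ‖z‖)⁻¹ := inv_nonneg.2 (by linarith)
  calc ‖Complex.log (1 - z) + z‖ ≤ ‖z‖ ^ 2 * (1 - ‖z‖)⁻¹ / 2 := h
    _ ≤ (1 - ‖z‖)⁻¹ * ‖z‖ ^ 2 := by linarith [mul_nonneg hq0 (sq_nonneg ‖z‖)]
    _ ≤ (1 - q)⁻¹ * ‖z‖ ^ 2 := by gcongr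

lemma norm_log_one_sub_mul_sub_le {q : ℝ} (hq : q < 1) {u w : ℂ} (hu : ‖u‖ ≤ q) (hw : ‖w‖ ≤ 1) :
    ‖Complex.log (1 - u * w) - w * Complex.log (1 - u)‖ ≤ 2 * (1 - q)⁻¹ * (‖u‖ ^ 2 * ‖w‖) := by
  have : 0 ≤ (1 - q)⁻¹ := inv_nonneg.2 (by linarith)
  have huw : ‖Complex.log (1 - u * w) + u * w‖ ≤ (1 - q)⁻¹ * ‖u * w‖ ^ 2 := by
    refine norm_log_one_sub_add_self_le hq ?_
    rw [norm_mul]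
    exact (mul_le_of_le_one_right (norm_nonneg u) hw).trans hu
  calc ‖Complex.log (1 - u * w) - w * Complex.log (1 - u)‖
      = ‖(Complex.log (1 - u * w) + u * w) - w * (Complex.log (1 - u) + u)‖ := by ring_nf
    _ ≤ (1 - q)⁻¹ * ‖u * w‖ ^ 2 + ‖w‖ * ((1 - q)⁻¹ * ‖u‖ ^ 2) := by
        refine (norm_sub_le _ _).trans (add_le_add huw ?_)
        rw [norm_mul]
        gcongr
        exact norm_log_one_sub_add_self_le hq hu
    _ = (1 - q)⁻¹ * ‖u‖ ^ 2 * ‖w‖ * (‖w‖ + 1) := by rw [norm_mul]; ring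
    _ ≤ (1 - q)⁻¹ * ‖u‖ ^ 2 * ‖w‖ * (1 + 1) := by gcongr
    _ = 2 * (1 - q)⁻¹ * (‖u‖ ^ 2 * ‖w‖) := by ring

/-- The difference between `∑ₚ -log(1 - p^(-σ)) p^(-s)` and `log ζ(s + σ)`. Since the terms
linear in `p^(-σ)` cancel, it converges beyond the line `re s = 1 - σ`. -/
noncomputable def eulerCorrection (σ s : ℂ) : ℂ :=
  ∑' p : Nat.Primes, (Complex.log (1 - (p : ℂ) ^ (-σ) * (p : ℂ) ^ (-s)) -
    (p : ℂ) ^ (-s) * Complex.log (1 - (p : ℂ) ^ (-σ)))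

lemma norm_prime_cpow_neg (hp : p.Prime) (s : ℂ) : ‖(p : ℂ) ^ (-s)‖ = (p : ℝ) ^ (-s.re) := by
  rw [Complex.norm_natCast_cpow_of_pos hp.pos, Complex.neg_re]

lemma differentiableOn_eulerCorrection {σ : ℂ} (hσ : 0 < σ.re) (hβ : 0 ≤ β)
    (hβσ : 1 < 2 * σ.re + β) : DifferentiableOn ℂ (eulerCorrection σ) {s | β < s.re} := by
  have norm_σ (p : Nat.Primes) : ‖(p : ℂ) ^ (-σ)‖ ≤ 2 ^ (-σ.re) := by
    rw [norm_prime_cpow_neg p.2]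
    exact prime_rpow_neg_le hσ p.2
  have norm_s (p : Nat.Primes) {s : ℂ} (hs : β < s.re) : ‖(p : ℂ) ^ (-s)‖ ≤ 1 := by
    rw [norm_prime_cpow_neg p.2]
    exact (prime_rpow_neg_lt_one (hβ.trans_lt hs) p.2).le
  have hsum : Summable fun p : Nat.Primes =>
      2 * (1 - (2 : ℝ) ^ (-σ.re))⁻¹ * (p : ℝ) ^ (-(2 * σ.re + β)) :=
    (Nat.Primes.summable_rpow.2 (by linarith)).mul_left _
  refine Complex.differentiableOn_tsum_of_summable_norm hsum (fun p s hs => ?_)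
    (isOpen_setOf_lt_re β) fun p s hs => ?_
  · have hp : (p : ℂ) ≠ 0 := by exact_mod_cast p.2.ne_zero
    have hcpow : DifferentiableAt ℂ (fun s : ℂ => (p : ℂ) ^ (-s)) s :=
      DifferentiableAt.const_cpow (by fun_prop) (.inl hp)
    refine (DifferentiableAt.sub (.clog (by fun_prop) ?_) (by fun_prop)).differentiableWithinAt
    rw [sub_eq_add_neg]
    refine Complex.mem_slitPlane_of_norm_lt_one ?_
    rw [norm_neg, norm_mul]
    exact (mul_le_of_le_one_right (norm_nonneg _) (norm_s p hs)).trans_lt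
      ((norm_σ p).trans_lt (two_rpow_neg_lt_one hσ))
  · refine (norm_log_one_sub_mul_sub_le (two_rpow_neg_lt_one hσ) (norm_σ p) (norm_s p hs)).trans ?_
    have hp1 : (1 : ℝ) ≤ p := by exact_mod_cast p.2.one_lt.le
    have hp0 : (0 : ℝ) < p := zero_lt_one.trans_le hp1
    have hq := sub_pos.2 (two_rpow_neg_lt_one hσ)
    gcongr
    rw [norm_prime_cpow_neg p.2, norm_prime_cpow_neg p.2, ← Real.rpow_mul_natCast hp0.le,
      ← Real.rpow_add hp0]
    refine Real.rpow_le_rpow_of_exponent_le hp1 ?_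
    push_cast
    linarith [mem_ofPred_eq ▸ hs]

end EulerFactors

section FriableZeta

variable {σ s : ℝ}

/-- The logarithm of the friable zeta function `ζ(σ, y) = ∏_{p ≤ y} (1 - p^(-σ))⁻¹`. -/
noncomputable def logFriableZeta (σ y : ℝ) : ℝ :=
  ∑ p ∈ Finset.Icc 1 ⌊y⌋₊ with p.Prime, logEulerFactor σ p

lemma logFriableZeta_eq_sum_ite (σ y : ℝ) : logFriableZeta σ y =
    ∑ n ∈ Finset.Icc 1 ⌊y⌋₊, if n.Prime then logEulerFactor σ n else 0 := by
  rw [logFriableZeta, Finset.sum_filter]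

lemma logFriableZeta_nonneg (hσ : 0 < σ) (y : ℝ) : 0 ≤ logFriableZeta σ y :=
  Finset.sum_nonneg fun _ hp => logEulerFactor_nonneg hσ (Finset.mem_filter.1 hp).2

lemma measurable_logFriableZeta : Measurable (logFriableZeta σ) := by
  have hnat : Measurable fun n : ℕ => ∑ p ∈ Finset.Icc 1 n with p.Prime, logEulerFactor σ p :=
    measurable_from_nat
  exact hnat.comp Nat.measurable_floor

lemma LSeries_ite_prime_eq_tsum (a : ℕ → ℂ) (s : ℂ) :
    LSeries (fun n => if n.Prime then a n else 0) s =
      ∑' p : Nat.Primes, (p : ℂ) ^ (-s) * a p := by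
  rw [LSeries]
  refine Eq.trans (tsum_congr fun n => ?_)
    (tsum_subtype {p : ℕ | p.Prime} fun p => (p : ℂ) ^ (-s) * a p).symm
  by_cases hn : n.Prime
  · rw [LSeries.term_of_ne_zero hn.ne_zero, if_pos hn, indicator_of_mem (by exact hn),
      Complex.cpow_neg, mul_comm, div_eq_mul_inv]
  · simp [LSeries.term, hn, indicator]

lemma summable_prime_cpow_neg {s : ℂ} (hs : 1 < s.re) :
    Summable fun p : Nat.Primes => (p : ℂ) ^ (-s) := by
  refine Summable.of_norm ((Nat.Primes.summable_rpow.2 (neg_lt_neg hs)).congr fun p => ?_)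
  exact (norm_prime_cpow_neg p.2 s).symm

lemma LSeries_logEulerFactor_eq (hσ : 0 < σ) (hs : 1 < s) :
    LSeries (fun n => ((if n.Prime then logEulerFactor σ n else 0 : ℝ) : ℂ)) s =
      Complex.log (riemannZeta (s + σ)) + eulerCorrection σ s := by
  have hsσ : 1 < s + σ := by linarith
  have hsplit (p : Nat.Primes) :
      (p : ℂ) ^ (-(σ : ℂ)) * (p : ℂ) ^ (-(s : ℂ)) = (p : ℂ) ^ (-((s + σ : ℝ) : ℂ)) := by
    rw [← Complex.cpow_add _ _ (by exact_mod_cast p.2.ne_zero)]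
    push_cast
    ring_nf
  have hlog : Summable fun p : Nat.Primes => Complex.log (1 - (p : ℂ) ^ (-((s + σ : ℝ) : ℂ))) :=
    (summable_prime_cpow_neg (by simpa using hsσ)).clog_one_sub
  have hfactor : Summable fun p : Nat.Primes => (p : ℂ) ^ (-(s : ℂ)) * logEulerFactor σ p := by
    refine .of_norm_bounded ((summable_prime_cpow_neg (s := s) (by simpa using hs)).norm.mul_right
      (logEulerFactor σ 2)) fun p => ?_
    rw [norm_mul, Complex.norm_real, Real.norm_of_nonneg (logEulerFactor_nonneg hσ p.2)]
    gcongr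
    exact logEulerFactor_le_two hσ p.2
  have hcorr : eulerCorrection σ s = ∑' p : Nat.Primes,
      (Complex.log (1 - (p : ℂ) ^ (-((s + σ : ℝ) : ℂ))) +
        (p : ℂ) ^ (-(s : ℂ)) * logEulerFactor σ p) := by
    refine tsum_congr fun p => ?_
    rw [hsplit, ofReal_logEulerFactor hσ p.2, mul_neg, sub_eq_add_neg]
  rw [hcorr, hlog.tsum_add hfactor, ← Complex.ofReal_add,
    ← tsum_neg_log_one_sub_eq_log_riemannZeta hsσ, tsum_neg, neg_add_cancel_left]
  simpa only [apply_ite Complex.ofReal, Complex.ofReal_zero] using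
    LSeries_ite_prime_eq_tsum (fun n => logEulerFactor σ n) s

lemma exists_hasTailMellin_logFriableZeta (hσ : 0 < σ) (hs : 1 < s) :
    ∃ m, HasTailMellin (logFriableZeta σ) s m ∧
      s * m = Complex.log (riemannZeta (s + σ)) + eulerCorrection σ s := by
  let a (n : ℕ) : ℝ := if n.Prime then logEulerFactor σ n else 0
  have ha_nonneg (n : ℕ) : 0 ≤ a n := by
    by_cases hn : n.Prime
    · simpa only [a, if_pos hn] using logEulerFactor_nonneg hσ hn
    · simp only [a, if_neg hn, le_refl]
  have ha_le (n : ℕ) : a n ≤ logEulerFactor σ 2 := by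
    by_cases hn : n.Prime
    · simpa only [a, if_pos hn] using logEulerFactor_le_two hσ hn
    · simpa only [a, if_neg hn] using logEulerFactor_nonneg hσ Nat.prime_two
  have ha_sum (n : ℕ) : ∑ k ∈ Finset.Icc 1 n, a k ≤ logEulerFactor σ 2 * (n : ℝ) ^ (1 : ℝ) :=
    (Finset.sum_le_sum fun k _ => ha_le k).trans_eq (by simp [mul_comm])
  obtain ⟨m, hm, hL⟩ := exists_hasTailMellin_partialSum ha_nonneg zero_le_one ha_sum hs
  refine ⟨m, ?_, by rw [← hL, LSeries_logEulerFactor_eq hσ hs]⟩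
  simpa only [a, ← logFriableZeta_eq_sum_ite] using hm

end FriableZeta

section ExpIntegral

/-- `(e^ξ - 1) / ξ`, written as an integral to cover `ξ = 0`. -/
noncomputable def expMean (ξ : ℝ) : ℝ := ∫ a in (0 : ℝ)..1, rexp (ξ * a)

/-- `I(ξ) = ∫₀^ξ (e^x - 1) / x dx`; the Laplace transform of the Dickman function at `-ξ` is a
constant multiple of `exp (I(ξ))`. -/
noncomputable def expMeanIntegral (ξ : ℝ) : ℝ := ∫ x in (0 : ℝ)..ξ, expMean x

variable {ξ κ s : ℝ}

lemma continuous_expMean : Continuous expMean :=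
  intervalIntegral.continuous_parametric_intervalIntegral_of_continuous' (by fun_prop) 0 1

lemma mul_expMean (ξ : ℝ) : ξ * expMean ξ = rexp ξ - 1 := by
  rw [expMean, intervalIntegral.mul_integral_comp_mul_left]
  simp

lemma monotone_expMean : Monotone expMean := fun x y hxy => by
  refine intervalIntegral.integral_mono_on zero_le_one
    (Continuous.intervalIntegrable (by fun_prop) _ _)
    (Continuous.intervalIntegrable (by fun_prop) _ _) fun a ha => ?_
  gcongr
  exact ha.1

lemma expMean_nonneg (ξ : ℝ) : 0 ≤ expMean ξ :=
  intervalIntegral.integral_nonneg zero_le_one fun _ _ => (exp_pos _).le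

lemma expMean_le_exp (hξ : 0 ≤ ξ) : expMean ξ ≤ rexp ξ := by
  have hle : expMean ξ ≤ ∫ _ in (0 : ℝ)..1, rexp ξ :=
    intervalIntegral.integral_mono_on zero_le_one (Continuous.intervalIntegrable (by fun_prop) _ _)
      intervalIntegrable_const fun a ha => exp_le_exp.2 (mul_le_of_le_one_right hξ ha.2)
  simpa using hle

lemma hasDerivAt_expMeanIntegral (ξ : ℝ) : HasDerivAt expMeanIntegral (expMean ξ) ξ :=
  continuous_expMean.integral_hasStrictDerivAt 0 ξ |>.hasDerivAt

lemma continuous_expMeanIntegral : Continuous expMeanIntegral :=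
  continuous_iff_continuousAt.2 fun ξ => (hasDerivAt_expMeanIntegral ξ).continuousAt

lemma monotone_expMeanIntegral : Monotone expMeanIntegral :=
  monotone_of_hasDerivAt_nonneg hasDerivAt_expMeanIntegral expMean_nonneg

lemma expMeanIntegral_add_one_sub_mem_Icc (ξ : ℝ) :
    expMeanIntegral (ξ + 1) - expMeanIntegral ξ ∈ Icc (expMean ξ) (expMean (ξ + 1)) := by
  obtain ⟨c, hc, hslope⟩ := exists_hasDerivAt_eq_slope expMeanIntegral expMean (lt_add_one ξ)
    continuous_expMeanIntegral.continuousOn fun x _ => hasDerivAt_expMeanIntegral x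
  rw [add_sub_cancel_left, div_one] at hslope
  exact hslope ▸ ⟨monotone_expMean hc.1.le, monotone_expMean hc.2.le⟩

lemma expMeanIntegral_mul_eq (κ t : ℝ) :
    expMeanIntegral (κ * t) = ∫ a in (0 : ℝ)..κ, t * expMean (t * a) := by
  rw [intervalIntegral.integral_const_mul, intervalIntegral.mul_integral_comp_mul_left,
    expMeanIntegral, mul_zero, mul_comm]

lemma hasTailMellin_intervalIntegral {Φ : ℝ → ℝ → ℝ} {m : ℝ → ℝ} (hκ : 0 ≤ κ)
    (hΦ : Measurable (Function.uncurry Φ)) (hΦ0 : ∀ y > 1, ∀ a ∈ Ioc 0 κ, 0 ≤ Φ y a)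
    (hm : ∀ a ∈ Ioc 0 κ, HasTailMellin (Φ · a) s (m a)) (hmi : IntegrableOn m (Ioc 0 κ)) :
    HasTailMellin (fun y => ∫ a in 0..κ, Φ y a) s (∫ a in 0..κ, m a) := by
  let F (y a : ℝ) : ℝ := Φ y a * y ^ (-(s + 1))
  have hF0 (a : ℝ) (ha : a ∈ Ioc 0 κ) : ∀ y ∈ Ioi 1, 0 ≤ F y a := fun y hy =>
    mul_nonneg (hΦ0 y hy a ha) (Real.rpow_nonneg (zero_lt_one.trans hy).le _)
  have hF : Integrable (Function.uncurry F)
      ((volume.restrict (Ioi 1)).prod (volume.restrict (Ioc 0 κ))) := by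
    have hFm : Measurable (Function.uncurry F) :=
      hΦ.mul (measurable_fst.pow_const _)
    rw [integrable_prod_iff' hFm.aestronglyMeasurable]
    constructor
    · filter_upwards [ae_restrict_mem measurableSet_Ioc] with a ha using (hm a ha).1
    · refine IntegrableOn.congr_fun hmi (fun a ha => ?_) measurableSet_Ioc
      rw [← (hm a ha).2]
      exact setIntegral_congr_fun measurableSet_Ioi fun y hy =>
        (Real.norm_of_nonneg (hF0 a ha y hy)).symm
  have hmul (y : ℝ) : (∫ a in 0..κ, Φ y a) * y ^ (-(s + 1)) = ∫ a in Ioc 0 κ, F y a := by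
    rw [← intervalIntegral.integral_of_le hκ, intervalIntegral.integral_mul_const]
  simp only [HasTailMellin, hmul]
  refine ⟨hF.integral_prod_left, ?_⟩
  rw [integral_integral_swap hF, intervalIntegral.integral_of_le hκ]
  exact setIntegral_congr_fun measurableSet_Ioc fun a ha => (hm a ha).2

lemma hasTailMellin_log_mul_expMean {a : ℝ} (ha : 0 < a) (has : a < s) :
    HasTailMellin (fun y => Real.log y * expMean (Real.log y * a)) s (1 / s * (1 / (s - a))) := by
  have hs : 0 < s := ha.trans has
  have hvalue : 1 / s * (1 / (s - a)) = 1 / a * (1 / (s - a) - 1 / (s - 0)) := by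
    have := sub_pos.2 has
    rw [sub_zero]
    field_simp
    ring
  rw [hvalue]
  refine (((hasTailMellin_rpow has).sub (hasTailMellin_rpow hs)).const_mul (1 / a)).congr
    fun y hy => ?_
  have hmul := mul_expMean (Real.log y * a)
  rw [← Real.rpow_def_of_pos (zero_lt_one.trans hy)] at hmul
  simp only [Real.rpow_zero]
  rw [← hmul]
  field_simp

lemma hasTailMellin_expMeanIntegral (hκ : 0 ≤ κ) (hκs : κ < s) :
    HasTailMellin (fun y => expMeanIntegral (κ * Real.log y)) s
      (1 / s * Real.log (s / (s - κ))) := by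
  have hpos (a : ℝ) (ha : a ∈ Icc 0 κ) : 0 < s - a := by linarith [ha.2]
  have hcont : ContinuousOn (fun a => 1 / s * (1 / (s - a))) (Icc 0 κ) :=
    continuousOn_const.mul (continuousOn_const.div (by fun_prop) fun a ha => (hpos a ha).ne')
  have hvalue : ∫ a in (0 : ℝ)..κ, 1 / s * (1 / (s - a)) = 1 / s * Real.log (s / (s - κ)) := by
    rw [intervalIntegral.integral_const_mul,
      intervalIntegral.integral_comp_sub_left (fun x => 1 / x) s,
      integral_one_div_of_pos (by linarith) (by linarith), sub_zero]
  simp only [expMeanIntegral_mul_eq, ← hvalue]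
  have := continuous_expMean.measurable
  exact hasTailMellin_intervalIntegral hκ (by unfold Function.uncurry; fun_prop)
    (fun y hy a _ => mul_nonneg (Real.log_nonneg (le_of_lt hy)) (expMean_nonneg _))
    (fun a ha => hasTailMellin_log_mul_expMean ha.1 (ha.2.trans_lt hκs))
    (hcont.integrableOn_Icc.mono_set Ioc_subset_Icc_self)

end ExpIntegral

section Oscillation

variable {σ β s : ℝ}

lemma exists_hasTailMellin_logFriableZeta_sub (hσ : 0 < σ) (hσ1 : σ ≤ 1) (hs : 1 < s) :
    ∃ m, HasTailMellin (fun y => logFriableZeta σ y - expMeanIntegral ((1 - σ) * Real.log y)) s m ∧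
      s * m = Complex.log (riemannZeta₁ (s + σ) / s) + eulerCorrection σ s := by
  have hs0 : 0 < s := zero_lt_one.trans hs
  have hpole : 0 < s + σ - 1 := by linarith
  obtain ⟨k, hk, hkζ⟩ := exists_hasTailMellin_logFriableZeta hσ hs
  obtain ⟨r, hr, hζ₁⟩ := exists_pos_riemannZeta₁_ofReal (s := s + σ) (by linarith)
  refine ⟨_, hk.sub (hasTailMellin_expMeanIntegral (sub_nonneg.2 hσ1) (by linarith)), ?_⟩
  have hζ : riemannZeta (s + σ) = (r / (s + σ - 1) : ℝ) := by
    rw [← Complex.ofReal_add, riemannZeta_eq_inv_sub_mul (by exact_mod_cast (sub_pos.1 hpole).ne'),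
      hζ₁]
    push_cast
    ring
  have hquot : riemannZeta₁ (s + σ) / s = (r / s : ℝ) := by
    rw [← Complex.ofReal_add, hζ₁, Complex.ofReal_div]
  have hlog : Real.log (r / s) =
      Real.log (r / (s + σ - 1)) - Real.log (s / (s - (1 - σ))) := by
    rw [← Real.log_div (by positivity) (by rw [sub_sub_eq_add_sub]; positivity)]
    congr 1
    rw [sub_sub_eq_add_sub]
    field_simp
  rw [hζ, ← Complex.ofReal_log (by positivity)] at hkζ
  rw [hquot, ← Complex.ofReal_log (by positivity), hlog]
  push_cast
  rw [mul_sub, hkζ, ← mul_assoc, mul_one_div_cancel (by exact_mod_cast hs0.ne')]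
  ring

lemma exists_forall_neg_rpow_le_of_not_frequently (hσ : 0 < σ) (hσ1 : σ ≤ 1) (hβ : 0 ≤ β)
    (h : ¬ ∃ᶠ y in atTop, logFriableZeta σ y < expMeanIntegral ((1 - σ) * Real.log y) - y ^ β) :
    ∃ C, ∀ y > 1, -(C * y ^ β) ≤
      logFriableZeta σ y - expMeanIntegral ((1 - σ) * Real.log y) := by
  rw [not_frequently] at h
  obtain ⟨T, hT⟩ := eventually_atTop.1 h
  refine ⟨max 1 (expMeanIntegral ((1 - σ) * Real.log T)), fun y hy => ?_⟩
  have hpow : 1 ≤ y ^ β := Real.one_le_rpow (le_of_lt hy) hβ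
  rcases le_total T y with hTy | hyT
  · have : y ^ β ≤ max 1 (expMeanIntegral ((1 - σ) * Real.log T)) * y ^ β :=
      le_mul_of_one_le_left (by positivity) (le_max_left _ _)
    linarith [not_lt.1 (hT y hTy)]
  · have hmono : expMeanIntegral ((1 - σ) * Real.log y) ≤ expMeanIntegral ((1 - σ) * Real.log T) :=
      monotone_expMeanIntegral (mul_le_mul_of_nonneg_left
        (Real.log_le_log (zero_lt_one.trans hy) hyT) (sub_nonneg.2 hσ1))
    have := (hmono.trans (le_max_right 1 _)).trans
      (le_mul_of_one_le_right (zero_le_one.trans (le_max_left _ _)) hpow)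
    linarith [logFriableZeta_nonneg hσ y]

lemma riemannZeta₁_add_div_mem_slitPlane (hσ : 0 ≤ σ) (hs : 0 < s) :
    riemannZeta₁ (s + σ) / s ∈ Complex.slitPlane := by
  obtain ⟨r, hr, hζ₁⟩ := exists_pos_riemannZeta₁_ofReal (s := s + σ) (by linarith)
  rw [← Complex.ofReal_add, hζ₁, ← Complex.ofReal_div, Complex.ofReal_mem_slitPlane]
  exact div_pos hr hs

lemma exists_extension_mul_exp_eq (hσ : 0 < σ) (hσ1 : σ ≤ 1) (hβ : 0 < β) (hβ1 : β ≤ 1)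
    (hβσ : 1 - 2 * σ < β)
    (h : ¬ ∃ᶠ y in atTop, logFriableZeta σ y < expMeanIntegral ((1 - σ) * Real.log y) - y ^ β) :
    ∃ F : ℂ → ℂ, DifferentiableOn ℂ F {s | β < s.re} ∧ ∀ s : ℝ, 1 < s →
      s * Complex.exp (s * F s) = riemannZeta₁ (s + σ) * Complex.exp (eulerCorrection σ s) := by
  set H : Set ℂ := {s | β < s.re} with hH
  let q (s : ℂ) : ℂ := riemannZeta₁ (s + σ) / s
  have ne_zero (s : ℂ) (hs : s ∈ H) : s ≠ 0 := by
    rintro rfl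
    exact hβ.not_gt (by simpa [hH] using hs)
  have hq : DifferentiableOn ℂ q H := by
    have := differentiable_riemannZeta₁
    exact DifferentiableOn.div (Differentiable.differentiableOn (by fun_prop)) differentiableOn_id
      ne_zero
  have hq_pos (s : ℝ) (hs : β < s) : q s ∈ Complex.slitPlane :=
    riemannZeta₁_add_div_mem_slitPlane hσ.le (hβ.trans hs)
  have hcorr : DifferentiableOn ℂ (eulerCorrection σ) H :=
    differentiableOn_eulerCorrection (by simpa using hσ) hβ.le (by simpa using by linarith)
  let G (s : ℂ) : ℂ := (Complex.log (q s) + eulerCorrection σ s) / s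
  have hG : DifferentiableOn ℂ G (H ∩ q ⁻¹' Complex.slitPlane) :=
    (((hq.mono inter_subset_left).clog fun s hs => hs.2).add
      (hcorr.mono inter_subset_left)).div differentiableOn_id fun s hs => ne_zero s hs.1
  obtain ⟨C, hC⟩ := exists_forall_neg_rpow_le_of_not_frequently hσ hσ1 hβ.le h
  have hmeas := measurable_logFriableZeta (σ := σ)
  have hmeas' := continuous_expMeanIntegral.measurable
  obtain ⟨F, hF, hFG⟩ := exists_differentiableOn_extension_of_neg_rpow_le (s₁ := 1)
    (by fun_prop) hC hβ1
    (hq.continuousOn.isOpen_inter_preimage (isOpen_setOf_lt_re β) Complex.isOpen_slitPlane)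
    (fun s hs => ⟨by simpa [hH] using hs, hq_pos s hs⟩) hG fun s hs => by
      obtain ⟨m, hm, hsm⟩ := exists_hasTailMellin_logFriableZeta_sub hσ hσ1 hs
      refine ⟨m, hm, ?_⟩
      simp only [G, q]
      rw [← hsm, mul_div_cancel_left₀ _ (by exact_mod_cast (zero_lt_one.trans hs).ne')]
  refine ⟨F, hF, fun s hs => ?_⟩
  have hs0 : (s : ℂ) ≠ 0 := by exact_mod_cast (zero_lt_one.trans hs).ne'
  rw [hFG s hs, mul_div_cancel₀ _ hs0, Complex.exp_add,
    Complex.exp_log (Complex.slitPlane_ne_zero (hq_pos s (hβ1.trans_lt hs))), ← mul_assoc,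
    mul_div_cancel₀ _ hs0]

lemma riemannZeta₁_eq_zero {z : ℂ} (hz : riemannZeta z = 0) (hz1 : z ≠ 1) : riemannZeta₁ z = 0 := by
  rw [riemannZeta_eq_inv_sub_mul hz1] at hz
  exact (mul_eq_zero.1 hz).resolve_left (inv_ne_zero (sub_ne_zero.2 hz1))

/-- If `log ζ(σ, y) - I` were bounded below by `-C y^β`, its transform would extend to `β < re s`,
and `ζ(s + σ)` would be an exponential there, up to nonvanishing factors. -/
theorem frequently_logFriableZeta_lt (hσ : 0 < σ) (hβ : 0 < β) (hβσ : 1 - 2 * σ < β) {z : ℂ}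
    (hz : riemannZeta z = 0) (hz1 : z.re < 1) (hzβ : β + σ < z.re) :
    ∃ᶠ y in atTop, logFriableZeta σ y < expMeanIntegral ((1 - σ) * Real.log y) - y ^ β := by
  by_contra hcon
  obtain ⟨F, hF, hFζ⟩ := exists_extension_mul_exp_eq hσ (by linarith) hβ (by linarith) hβσ hcon
  have hcorr : DifferentiableOn ℂ (eulerCorrection σ) {s | β < s.re} :=
    differentiableOn_eulerCorrection (by simpa using hσ) hβ.le (by simpa using by linarith)
  have hζ₁ : DifferentiableOn ℂ (fun s : ℂ => riemannZeta₁ (s + σ)) {s | β < s.re} :=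
    Differentiable.differentiableOn (by have := differentiable_riemannZeta₁; fun_prop)
  have identity : EqOn (fun s => s * Complex.exp (s * F s))
      (fun s => riemannZeta₁ (s + σ) * Complex.exp (eulerCorrection σ s)) {s | β < s.re} := by
    refine AnalyticOnNhd.eqOn_of_preconnected_of_frequently_eq (z₀ := ((2 : ℝ) : ℂ))
      (DifferentiableOn.analyticOnNhd (by fun_prop) (isOpen_setOf_lt_re β))
      (DifferentiableOn.analyticOnNhd (by fun_prop) (isOpen_setOf_lt_re β))
      (convex_halfSpace_re_gt β).isPreconnected (by simpa using by linarith)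
      (frequently_nhdsNE_ofReal ?_)
    filter_upwards [Ioi_mem_nhds one_lt_two] with s hs using hFζ s hs
  have hmem : z - σ ∈ {s : ℂ | β < s.re} := by simpa using by linarith
  have hzero := identity hmem
  simp only [sub_add_cancel, riemannZeta₁_eq_zero hz (by rintro rfl; simp at hz1), zero_mul,
    mul_eq_zero, Complex.exp_ne_zero, or_false] at hzero
  rw [hzero] at hmem
  exact hβ.not_gt (by simpa using hmem)

end Oscillation

section Concentration

/-- The exponential moment `∫₀^∞ f(v) e^(ξv) dv`: the Laplace transform at `-ξ`. -/
noncomputable def expMoment (f : ℝ → ℝ) (ξ : ℝ) : ℝ := ∫ v in Ioi 0, f v * rexp (ξ * v)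

variable {f : ℝ → ℝ} {ξ V w : ℝ}

lemma hasDerivAt_expMoment (hfm : Measurable f) (hf : ∀ v, 0 ≤ f v)
    (hint : ∀ ξ, IntegrableOn (fun v => f v * rexp (ξ * v)) (Ioi 0)) (ξ : ℝ) :
    HasDerivAt (expMoment f) (∫ v in Ioi 0, v * f v * rexp (ξ * v)) ξ := by
  let μ : Measure ℝ := (volume.restrict (Ioi 0)).withDensity fun v => ENNReal.ofReal (f v)
  have hdens : Measurable fun v => ENNReal.ofReal (f v) := hfm.ennreal_ofReal
  have hintegral (g : ℝ → ℝ) : ∫ v, g v ∂μ = ∫ v in Ioi 0, f v * g v := by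
    simp only [μ, integral_withDensity_eq_integral_toReal_smul hdens (by simp),
      ENNReal.toReal_ofReal (hf _), smul_eq_mul]
  have hset : integrableExpSet id μ = univ := by
    refine eq_univ_of_forall fun ξ => ?_
    rw [integrableExpSet, mem_ofPred_eq,
      integrable_withDensity_iff_integrable_smul' hdens (by simp)]
    simpa only [ENNReal.toReal_ofReal (hf _), smul_eq_mul, id, IntegrableOn] using hint ξ
  have hmgf : mgf id μ = expMoment f := funext fun ξ => hintegral _
  have hderiv := hasDerivAt_mgf (X := id) (μ := μ) (t := ξ) (by simp [hset])
  rw [hmgf, hintegral] at hderiv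
  simpa only [id, mul_assoc, mul_left_comm] using hderiv

lemma mul_exp_le_of_notMem_Icc (hf : ∀ v, 0 ≤ f v) (v : ℝ) (hv : v ∉ Icc w V) :
    f v * rexp (ξ * v) ≤
      rexp (-V) * (f v * rexp ((ξ + 1) * v)) + rexp w * (f v * rexp ((ξ - 1) * v)) := by
  have hexp : rexp (ξ * v) ≤ rexp (-V + (ξ + 1) * v) + rexp (w + (ξ - 1) * v) := by
    rcases lt_or_ge v w with hvw | hvw
    · exact (exp_le_exp.2 (by linarith)).trans (le_add_of_nonneg_left (exp_pos _).le)
    · have hVv : V < v := lt_of_not_ge fun h => hv ⟨hvw, h⟩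
      exact (exp_le_exp.2 (by linarith)).trans (le_add_of_nonneg_right (exp_pos _).le)
  calc f v * rexp (ξ * v)
      ≤ f v * (rexp (-V + (ξ + 1) * v) + rexp (w + (ξ - 1) * v)) :=
        mul_le_mul_of_nonneg_left hexp (hf v)
    _ = _ := by rw [exp_add, exp_add]; ring

/-- Chernoff's bound: both tails of `f(v) e^(ξv)` are controlled by the moments at `ξ ± 1`, so some
point between them must carry at least the average of the remaining mass. -/
lemma exists_expMoment_le_mul_exp (hf : ∀ v, 0 ≤ f v)
    (hint : ∀ ξ, IntegrableOn (fun v => f v * rexp (ξ * v)) (Ioi 0)) (hV : 0 < V)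
    (htails : rexp (-V) * expMoment f (ξ + 1) + rexp w * expMoment f (ξ - 1) <
      expMoment f ξ / 2) :
    ∃ v ∈ Ioc 0 V, w ≤ v ∧ expMoment f ξ ≤ 2 * V * (f v * rexp (ξ * v)) := by
  by_contra! hsmall
  set c := expMoment f ξ / (2 * V)
  have hc0 : 0 ≤ c :=
    div_nonneg (integral_nonneg fun v => mul_nonneg (hf v) (exp_pos _).le) (by positivity)
  let tails (v : ℝ) : ℝ :=
    rexp (-V) * (f v * rexp ((ξ + 1) * v)) + rexp w * (f v * rexp ((ξ - 1) * v))
  have htails0 (v : ℝ) : 0 ≤ tails v := by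
    have := hf v
    positivity
  have hbound (v : ℝ) (hv : v ∈ Ioi 0) :
      f v * rexp (ξ * v) ≤ tails v + (Ioc 0 V).indicator (fun _ => c) v := by
    by_cases hvV : v ∈ Icc w V
    · rw [indicator_of_mem (show v ∈ Ioc 0 V from ⟨hv, hvV.2⟩)]
      refine (le_div_iff₀' (by positivity)).2 (hsmall v ⟨hv, hvV.2⟩ hvV.1).le |>.trans ?_
      exact le_add_of_nonneg_left (htails0 v)
    · exact (mul_exp_le_of_notMem_Icc hf v hvV).trans
        (le_add_of_nonneg_right (indicator_nonneg (fun _ _ => hc0) v))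
  have hleft := (hint (ξ + 1)).const_mul (rexp (-V))
  have hright := (hint (ξ - 1)).const_mul (rexp w)
  have hmid : IntegrableOn ((Ioc 0 V).indicator fun _ => c) (Ioi 0) :=
    ((integrable_indicator_iff measurableSet_Ioc).2 (integrableOn_const (by simp))).integrableOn
  have hle := setIntegral_mono_on (hint ξ) ((hleft.add hright).add hmid) measurableSet_Ioi hbound
  have hmid_eq : ∫ v in Ioi 0, (Ioc 0 V).indicator (fun _ => c) v = expMoment f ξ / 2 := by
    rw [setIntegral_indicator measurableSet_Ioc, inter_eq_right.2 Ioc_subset_Ioi_self,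
      setIntegral_const, Measure.real, Real.volume_Ioc, sub_zero, ENNReal.toReal_ofReal hV.le,
      smul_eq_mul]
    simp only [c]
    field_simp
  rw [integral_add' (hleft.add hright) hmid, integral_add' hleft hright, integral_const_mul,
    integral_const_mul, hmid_eq] at hle
  simp only [expMoment] at hle htails
  linarith

end Concentration

section Dickman

/-- The Dickman function, extended to negative arguments by the value `1`. -/
structure IsDickman (r : ℝ → ℝ) : Prop where
  continuous : Continuous r
  eq_one : ∀ t ≤ 1, r t = 1
  eq_one_sub_integral : ∀ t ≥ 1, r t = 1 - ∫ v in 1..t, r (v - 1) / v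

lemma isDickman_comp_max {ρ : ℝ → ℝ} (hcont : ContinuousOn ρ (Ici 0))
    (hone : ∀ t ∈ Icc (0 : ℝ) 1, ρ t = 1)
    (heq : ∀ t ≥ (1 : ℝ), ρ t = 1 - ∫ v in (1 : ℝ)..t, ρ (v - 1) / v) :
    IsDickman fun v => ρ (max v 0) where
  continuous := hcont.comp_continuous (by fun_prop) fun _ => mem_Ici.2 (le_max_right _ _)
  eq_one t ht := hone _ ⟨le_max_right _ _, max_le ht zero_le_one⟩
  eq_one_sub_integral t ht := by
    rw [max_eq_left (by linarith), heq t ht]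
    congr 1
    refine intervalIntegral.integral_congr fun v hv => ?_
    rw [uIcc_of_le ht] at hv
    simp only [max_eq_left (sub_nonneg.2 hv.1)]

namespace IsDickman

variable {r : ℝ → ℝ} {v ξ : ℝ}

lemma intervalIntegrable (hr : IsDickman r) (a b : ℝ) : IntervalIntegrable r volume a b :=
  hr.continuous.intervalIntegrable a b

lemma continuousOn_delay_div (hr : IsDickman r) :
    ContinuousOn (fun v => r (v - 1) / v) (Ioi 0) :=
  (hr.continuous.comp (by fun_prop)).continuousOn.div continuousOn_id fun _ hx => ne_of_gt hx

lemma intervalIntegrable_delay_div (hr : IsDickman r) (hv : 1 ≤ v) :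
    IntervalIntegrable (fun v => r (v - 1) / v) volume 1 v := by
  refine (hr.continuousOn_delay_div.mono ?_).intervalIntegrable
  rw [uIcc_of_le hv]
  exact fun x hx => zero_lt_one.trans_le hx.1

lemma hasDerivWithinAt_Ici (hr : IsDickman r) (hv : 1 ≤ v) :
    HasDerivWithinAt r (-(r (v - 1) / v)) (Ici v) v := by
  have hmem : Ioi (0 : ℝ) ∈ 𝓝 v := Ioi_mem_nhds (by linarith)
  have hint : HasDerivAt (fun t => 1 - ∫ v in 1..t, r (v - 1) / v) (-(r (v - 1) / v)) v :=
    (intervalIntegral.integral_hasDerivAt_right (hr.intervalIntegrable_delay_div hv)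
      (hr.continuousOn_delay_div.stronglyMeasurableAtFilter_nhdsWithin measurableSet_Ioi v
        |>.filter_mono (le_of_eq (nhdsWithin_eq_nhds.2 hmem).symm))
      (hr.continuousOn_delay_div.continuousAt hmem)).const_sub 1
  exact hint.hasDerivWithinAt.congr (fun x hx => hr.eq_one_sub_integral x (hv.trans hx))
    (hr.eq_one_sub_integral v hv)

/-- Both sides have derivative `r(v) - r(v - 1)` and agree at `v = 1`. -/
lemma mul_eq_integral (hr : IsDickman r) (hv : 1 ≤ v) : v * r v = ∫ u in (v - 1)..v, r u := by
  set P : ℝ → ℝ := fun v => ∫ u in 0..v, r u with hP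
  have hPderiv (x : ℝ) : HasDerivAt P (r x) x :=
    (hr.continuous.integral_hasStrictDerivAt 0 x).hasDerivAt
  have hPcont : Continuous P := continuous_iff_continuousAt.2 fun x => (hPderiv x).continuousAt
  have hrcont := hr.continuous
  have hderiv (x : ℝ) (hx : x ∈ Ico 1 v) :
      HasDerivWithinAt (fun v => v * r v - (P v - P (v - 1))) 0 (Ici x) x := by
    have hx0 : x ≠ 0 := (zero_lt_one.trans_le hx.1).ne'
    have hprod := (hasDerivWithinAt_id x (Ici x)).mul (hr.hasDerivWithinAt_Ici hx.1)
    have hwindow := (hPderiv x).sub ((hPderiv (x - 1)).comp_sub_const x 1)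
    refine (hprod.sub hwindow.hasDerivWithinAt).congr_deriv ?_
    simp only [id_eq]
    field_simp
    ring
  have hconst := constant_of_has_deriv_right_zero (by fun_prop) hderiv v ⟨hv, le_rfl⟩
  have hP1 : P 1 = 1 := by
    rw [hP]
    simp only
    rw [intervalIntegral.integral_congr (g := fun _ => (1 : ℝ)) fun u hu => hr.eq_one u ?_]
    · simp
    · exact (uIcc_of_le (zero_le_one (α := ℝ)) ▸ hu).2
  have hP0 : P 0 = 0 := intervalIntegral.integral_same
  rw [← intervalIntegral.integral_interval_sub_left (hr.intervalIntegrable 0 v)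
    (hr.intervalIntegrable 0 (v - 1))]
  simp only [hr.eq_one 1 le_rfl, sub_self, hP1, hP0] at hconst
  linarith

lemma pos (hr : IsDickman r) (v : ℝ) : 0 < r v := by
  by_contra! hv
  set S : Set ℝ := {v | r v ≤ 0}
  have hS1 : ∀ x ∈ S, 1 ≤ x := fun x hx => by
    by_contra! hx1
    exact absurd (hr.eq_one x hx1.le ▸ hx : (1 : ℝ) ≤ 0) (by norm_num)
  have hSbdd : BddBelow S := ⟨1, hS1⟩
  have hinf : sInf S ∈ S := (isClosed_le hr.continuous continuous_const).csInf_mem ⟨v, hv⟩ hSbdd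
  have hwindow : 0 < ∫ u in (sInf S - 1)..sInf S, r u := by
    refine intervalIntegral.intervalIntegral_pos_of_pos_on (hr.intervalIntegrable _ _)
      (fun x hx => ?_) (by linarith)
    by_contra! hx0
    exact (csInf_le hSbdd hx0).not_gt hx.2
  rw [← hr.mul_eq_integral (hS1 _ hinf)] at hwindow
  exact hwindow.not_ge (mul_nonpos_of_nonneg_of_nonpos (by linarith [hS1 _ hinf]) hinf)

lemma antitone (hr : IsDickman r) : Antitone r := by
  have hright : AntitoneOn r (Ici 1) := by
    intro a ha b hb hab
    rw [hr.eq_one_sub_integral a ha, hr.eq_one_sub_integral b hb]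
    refine sub_le_sub_left (intervalIntegral.integral_mono_interval le_rfl ha hab ?_
      (hr.intervalIntegrable_delay_div hb)) 1
    filter_upwards [ae_restrict_mem measurableSet_Ioc] with u hu
    exact div_nonneg (hr.pos _).le (zero_le_one.trans hu.1.le)
  intro a b hab
  rcases le_total a 1 with ha | ha
  · rcases le_total b 1 with hb | hb
    · rw [hr.eq_one a ha, hr.eq_one b hb]
    · rw [hr.eq_one a ha, ← hr.eq_one 1 le_rfl]
      exact hright self_mem_Ici hb hb
  · exact hright ha (ha.trans hab) hab

lemma le_one (hr : IsDickman r) (v : ℝ) : r v ≤ 1 := by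
  rw [← hr.eq_one (min v 1) (min_le_right v 1)]
  exact hr.antitone (min_le_left v 1)

lemma mul_le_delay (hr : IsDickman r) (hv : 1 ≤ v) : v * r v ≤ r (v - 1) := by
  have hle := intervalIntegral.integral_mono_on (sub_le_self v zero_le_one)
    (hr.intervalIntegrable (v - 1) v) intervalIntegrable_const fun x hx => hr.antitone hx.1
  simpa [hr.mul_eq_integral hv] using hle

/-- Once `v ≥ e^ξ`, each unit step divides `r` by at least `e^ξ`. -/
lemma exists_le_mul_exp_neg (hr : IsDickman r) (hξ : 0 ≤ ξ) :
    ∃ C : ℝ, ∀ v, r v ≤ C * rexp (-ξ * v) := by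
  refine ⟨rexp (ξ * (rexp ξ + 1)), fun v => ?_⟩
  obtain ⟨n, hn⟩ := exists_nat_ge v
  induction n generalizing v with
  | zero =>
    rw [← exp_add]
    refine (hr.le_one v).trans (one_le_exp ?_)
    have := exp_pos ξ
    rw [Nat.cast_zero] at hn
    nlinarith
  | succ n ih =>
    rcases le_total v (rexp ξ + 1) with hvξ | hvξ
    · rw [← exp_add]
      exact (hr.le_one v).trans (one_le_exp (by nlinarith))
    · have hstep : rexp (-ξ * (v - 1)) = rexp ξ * rexp (-ξ * v) := by
        rw [← exp_add]
        ring_nf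
      have hexp := exp_pos ξ
      refine le_of_mul_le_mul_left ?_ hexp
      calc rexp ξ * r v ≤ v * r v := mul_le_mul_of_nonneg_right (by linarith) (hr.pos v).le
        _ ≤ r (v - 1) := hr.mul_le_delay (by linarith)
        _ ≤ _ := ih (v - 1) (by push_cast at hn; linarith)
        _ = _ := by rw [hstep]; ring

lemma integrableOn_mul_exp (hr : IsDickman r) (ξ : ℝ) :
    IntegrableOn (fun v => r v * rexp (ξ * v)) (Ioi 0) := by
  obtain ⟨C, hC⟩ := hr.exists_le_mul_exp_neg (add_nonneg (le_max_right ξ 0) zero_le_one)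
  have hneg : ξ - (max ξ 0 + 1) < 0 := by linarith [le_max_left ξ 0]
  have hcont := hr.continuous
  refine ((integrableOn_exp_mul_Ioi hneg 0).const_mul C).mono'
    (Continuous.aestronglyMeasurable (by fun_prop)) (Eventually.of_forall fun v => ?_)
  rw [norm_of_nonneg (mul_nonneg (hr.pos v).le (exp_pos _).le)]
  refine (mul_le_mul_of_nonneg_right (hC v) (exp_pos _).le).trans_eq ?_
  rw [mul_assoc, ← exp_add]
  ring_nf

lemma mul_eq_integral_min (hr : IsDickman r) (hv : 0 ≤ v) :
    v * r v = ∫ a in 0..min v 1, r (v - a) := by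
  rw [intervalIntegral.integral_comp_sub_left r v, sub_zero]
  rcases le_total v 1 with hv1 | hv1
  · rw [min_eq_left hv1, sub_self, hr.eq_one v hv1,
      intervalIntegral.integral_congr (g := fun _ => (1 : ℝ)) fun u hu => hr.eq_one u ?_]
    · simp
    · exact (uIcc_of_le hv ▸ hu).2.trans hv1
  · rw [min_eq_right hv1, hr.mul_eq_integral hv1]

/-- By `mul_eq_integral_min`, the function `v r(v)` is the convolution of `r` with the indicator
function of `[0, 1]`. -/
lemma integral_mul_mul_exp (hr : IsDickman r) (ξ : ℝ) :
    ∫ v in Ioi 0, v * r v * rexp (ξ * v) = expMean ξ * expMoment r ξ := by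
  let window : ℝ → ℝ := (Iic 1).indicator fun a => rexp (ξ * a)
  have hrestrict (s : Set ℝ) : ∫ a in s, window a = ∫ a in s ∩ Iic 1, rexp (ξ * a) :=
    setIntegral_indicator measurableSet_Iic
  have hwindow : IntegrableOn window (Ioi 0) := by
    rw [integrableOn_indicator_iff measurableSet_Iic, inter_comm, Ioi_inter_Iic]
    exact (Continuous.continuousOn (by fun_prop)).integrableOn_Icc.mono_set Ioc_subset_Icc_self
  have hconv := integral_posConvolution hwindow (hr.integrableOn_mul_exp ξ)
    (ContinuousLinearMap.mul ℝ ℝ)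
  have hmean : ∫ a in Ioi 0, window a = expMean ξ := by
    rw [hrestrict, Ioi_inter_Iic, expMean, intervalIntegral.integral_of_le zero_le_one]
  rw [hmean] at hconv
  refine (setIntegral_congr_fun measurableSet_Ioi fun v (hv : 0 < v) => ?_).trans hconv
  have hmul (a : ℝ) : window a * (r (v - a) * rexp (ξ * (v - a))) =
      (Iic 1).indicator (fun a => r (v - a)) a * rexp (ξ * v) := by
    by_cases ha : a ∈ Iic 1
    · simp only [window, indicator_of_mem ha]
      rw [mul_left_comm, ← exp_add]
      ring_nf
    · simp [window, indicator_of_notMem ha]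
  simp only [ContinuousLinearMap.mul_apply', hmul]
  rw [intervalIntegral.integral_mul_const, hr.mul_eq_integral_min hv.le,
    intervalIntegral.integral_of_le hv.le, setIntegral_indicator measurableSet_Iic,
    Ioc_inter_Iic, intervalIntegral.integral_of_le (le_min hv.le zero_le_one)]

lemma expMoment_eq (hr : IsDickman r) (ξ : ℝ) :
    expMoment r ξ = expMoment r 0 * rexp (expMeanIntegral ξ) := by
  have hderiv (ξ : ℝ) : HasDerivAt (fun ξ => expMoment r ξ * rexp (-expMeanIntegral ξ)) 0 ξ := by
    have hmoment := hasDerivAt_expMoment hr.continuous.measurable (fun v => (hr.pos v).le)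
      hr.integrableOn_mul_exp ξ
    rw [hr.integral_mul_mul_exp] at hmoment
    refine (hmoment.mul (hasDerivAt_expMeanIntegral ξ).neg.exp).congr_deriv ?_
    simp only [Pi.neg_apply]
    ring
  have hconst := is_const_of_deriv_eq_zero (fun ξ => (hderiv ξ).differentiableAt)
    (fun ξ => (hderiv ξ).deriv) ξ 0
  have hI0 : expMeanIntegral 0 = 0 := intervalIntegral.integral_same
  rw [hI0, neg_zero, exp_zero, mul_one] at hconst
  rw [← hconst, mul_assoc, ← exp_add, neg_add_cancel, exp_zero, mul_one]

lemma expMoment_pos (hr : IsDickman r) (ξ : ℝ) : 0 < expMoment r ξ := by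
  have hpos (v : ℝ) : 0 < r v * rexp (ξ * v) := mul_pos (hr.pos v) (exp_pos _)
  rw [expMoment, setIntegral_pos_iff_support_of_nonneg_ae
    (Eventually.of_forall fun v => (hpos v).le) (hr.integrableOn_mul_exp ξ),
    eq_univ_of_forall fun v => Function.mem_support.2 (hpos v).ne']
  simp

/-- The moments at `ξ ± 1` are known from `expMoment_eq`, so the mass of `r(v) e^(ξv)` concentrates
between `I(ξ) - I(ξ - 1)` and `I(ξ + 1) - I(ξ)`, up to `2`. -/
lemma exists_expMoment_le (hr : IsDickman r) (hξ : 0 ≤ ξ) :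
    ∃ v, 0 < v ∧ expMean (ξ - 1) - 2 ≤ v ∧ v ≤ rexp (ξ + 2) ∧
      expMoment r 0 * rexp (expMeanIntegral ξ) ≤ 2 * rexp (ξ + 2) * (r v * rexp (ξ * v)) := by
  have hshift (V η : ℝ) (hV : V + expMeanIntegral η ≤ expMeanIntegral ξ - 2) :
      rexp V * expMoment r η ≤ rexp (-2) * expMoment r ξ := by
    rw [hr.expMoment_eq η, hr.expMoment_eq ξ, mul_left_comm, mul_left_comm (rexp (-2)), ← exp_add,
      ← exp_add]
    exact mul_le_mul_of_nonneg_left (exp_le_exp.2 (by linarith)) (hr.expMoment_pos 0).le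
  have hsub := expMeanIntegral_add_one_sub_mem_Icc (ξ - 1)
  rw [sub_add_cancel] at hsub
  have hlower := hshift (expMean (ξ - 1) - 2) (ξ - 1) (by linarith [hsub.1])
  have hupper := hshift (-rexp (ξ + 2)) (ξ + 1) (by
    have hexp : rexp (ξ + 1) + 2 ≤ rexp (ξ + 2) := by
      rw [show ξ + 2 = ξ + 1 + 1 by ring, exp_add (ξ + 1)]
      nlinarith [exp_one_gt_d9, add_one_le_exp (ξ + 1)]
    linarith [(expMeanIntegral_add_one_sub_mem_Icc ξ).2,
      expMean_le_exp (add_nonneg hξ zero_le_one)])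
  have hexp : rexp (-2) < 1 / 4 := by
    rw [show (-2 : ℝ) = -1 + -1 by norm_num, exp_add]
    nlinarith [exp_neg_one_lt_d9, exp_pos (-1)]
  have htails : rexp (-rexp (ξ + 2)) * expMoment r (ξ + 1) +
      rexp (expMean (ξ - 1) - 2) * expMoment r (ξ - 1) < expMoment r ξ / 2 := by
    nlinarith [hr.expMoment_pos ξ]
  obtain ⟨v, hv, hwv, hmass⟩ := exists_expMoment_le_mul_exp (fun v => (hr.pos v).le)
    hr.integrableOn_mul_exp (exp_pos (ξ + 2)) htails
  exact ⟨v, hv.1, hwv, hv.2, hr.expMoment_eq ξ ▸ hmass⟩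

end IsDickman

end Dickman

section Rankin

variable {σ x y : ℝ}

lemma prod_primesBelow_inv_eq_exp_logFriableZeta (hσ : 0 < σ) (y : ℝ) :
    ∏ p ∈ (⌊y⌋₊ + 1).primesBelow, (1 - (p : ℝ) ^ (-σ))⁻¹ = rexp (logFriableZeta σ y) := by
  have hprimes : (⌊y⌋₊ + 1).primesBelow = {p ∈ Finset.Icc 1 ⌊y⌋₊ | p.Prime} := by
    ext p
    simp only [Nat.mem_primesBelow, Finset.mem_filter, Finset.mem_Icc, Nat.lt_succ_iff]
    exact ⟨fun h => ⟨⟨h.2.one_le, h.1⟩, h.2⟩, fun h => ⟨h.1.2, h.2⟩⟩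
  rw [hprimes, logFriableZeta, exp_sum]
  refine Finset.prod_congr rfl fun p hp => ?_
  have hp1 := prime_rpow_neg_lt_one hσ (Finset.mem_filter.1 hp).2
  rw [logEulerFactor, exp_neg, exp_log (sub_pos.2 hp1)]

lemma sum_rpow_neg_le_exp_logFriableZeta (hσ : 0 < σ) {s : Finset ℕ}
    (hs : ∀ n ∈ s, n ∈ Nat.smoothNumbers (⌊y⌋₊ + 1)) :
    ∑ n ∈ s, (n : ℝ) ^ (-σ) ≤ rexp (logFriableZeta σ y) := by
  let f : ℕ →* ℝ :=
    { toFun := fun n => (n : ℝ) ^ (-σ)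
      map_one' := by simp
      map_mul' := fun m n => by
        rw [Nat.cast_mul, mul_rpow m.cast_nonneg n.cast_nonneg] }
  have hf (n : ℕ) : 0 ≤ f n := rpow_nonneg n.cast_nonneg _
  have hsum := (EulerProduct.summable_and_hasSum_smoothNumbers_prod_primesBelow_geometric (f := f)
    (fun {p} hp => (norm_of_nonneg (hf p)).trans_lt (prime_rpow_neg_lt_one hσ hp)) (⌊y⌋₊ + 1)).2
  rw [← prod_primesBelow_inv_eq_exp_logFriableZeta hσ,
    ← Finset.sum_subtype_of_mem (fun n : ℕ => (n : ℝ) ^ (-σ)) hs]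
  exact sum_le_hasSum _ (fun n _ => hf n) hsum

lemma Psi_le_rpow_mul_exp_logFriableZeta (hσ : 0 < σ) (hx : 0 ≤ x) :
    (Psi x y : ℝ) ≤ x ^ σ * rexp (logFriableZeta σ y) := by
  set S : Set ℕ := {n | 1 ≤ n ∧ (n : ℝ) ≤ x ∧ ∀ p : ℕ, p.Prime → p ∣ n → (p : ℝ) ≤ y} with hS
  have hfin : S.Finite := (finite_Iic ⌊x⌋₊).subset fun n hn => Nat.le_floor hn.2.1
  have hsmooth (n : ℕ) (hn : n ∈ hfin.toFinset) : n ∈ Nat.smoothNumbers (⌊y⌋₊ + 1) := by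
    rw [hfin.mem_toFinset] at hn
    exact Nat.mem_smoothNumbers'.2 fun p hp hpn =>
      Nat.lt_succ_of_le (Nat.le_floor (hn.2.2 p hp hpn))
  have hterm (n : ℕ) (hn : n ∈ hfin.toFinset) : 1 ≤ x ^ σ * (n : ℝ) ^ (-σ) := by
    rw [hfin.mem_toFinset] at hn
    have hn0 : (0 : ℝ) < n := Nat.cast_pos.2 hn.1
    rw [rpow_neg hn0.le, ← div_eq_mul_inv, one_le_div (rpow_pos_of_pos hn0 σ)]
    exact rpow_le_rpow hn0.le hn.2.1 hσ.le
  calc (Psi x y : ℝ) = ∑ n ∈ hfin.toFinset, 1 := by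
        rw [Psi, ← hS, ncard_eq_toFinset_card S hfin, Finset.cast_card]
    _ ≤ ∑ n ∈ hfin.toFinset, x ^ σ * (n : ℝ) ^ (-σ) := Finset.sum_le_sum hterm
    _ = x ^ σ * ∑ n ∈ hfin.toFinset, (n : ℝ) ^ (-σ) := (Finset.mul_sum _ _ _).symm
    _ ≤ _ := mul_le_mul_of_nonneg_left (sum_rpow_neg_le_exp_logFriableZeta hσ hsmooth)
        (rpow_nonneg hx σ)

end Rankin

section LogarithmicOrder

variable {f : ℝ → ℝ} {κ : ℝ}

lemma tendsto_atTop_of_tendsto_log_div_log (hκ : 0 < κ) (hf0 : ∀ᶠ y in atTop, 0 < f y)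
    (hf : Tendsto (fun y => Real.log (f y) / Real.log y) atTop (𝓝 κ)) :
    Tendsto f atTop atTop := by
  refine (tendsto_exp_atTop.comp (hf.pos_mul_atTop hκ tendsto_log_atTop)).congr' ?_
  filter_upwards [hf0, eventually_gt_atTop 1] with y hfy hy
  rw [Function.comp_apply, div_mul_cancel₀ _ (log_pos hy).ne', exp_log hfy]

lemma eventually_rpow_le_and_le_rpow (hκ : 0 < κ) (hf0 : ∀ᶠ y in atTop, 0 < f y)
    (hf : Tendsto (fun y => Real.log (f y) / Real.log y) atTop (𝓝 κ)) {η : ℝ} (hη : 0 < η) :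
    ∀ᶠ y in atTop, f y ^ (1 / κ - η) ≤ y ∧ y ≤ f y ^ (1 / κ + η) := by
  have hκη : 0 < κ * η := mul_pos hκ hη
  have hlower := (hf.mul_const (1 / κ - η)).eventually_lt_const
    (show κ * (1 / κ - η) < 1 by rw [mul_sub, mul_one_div_cancel hκ.ne']; linarith)
  have hupper := (hf.mul_const (1 / κ + η)).eventually_const_lt
    (show 1 < κ * (1 / κ + η) by rw [mul_add, mul_one_div_cancel hκ.ne']; linarith)
  filter_upwards [hf0, eventually_gt_atTop 1, hlower, hupper] with y hfy hy hylower hyupper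
  have hlog : 0 < Real.log y := log_pos hy
  rw [div_mul_eq_mul_div, div_lt_one hlog] at hylower
  rw [div_mul_eq_mul_div, one_lt_div hlog] at hyupper
  rw [rpow_def_of_pos hfy, rpow_def_of_pos hfy, ← le_log_iff_exp_le (by linarith),
    ← log_le_iff_le_exp (by linarith)]
  exact ⟨hylower.le, hyupper.le⟩

lemma eventually_add_mul_log_add_rpow_le_rpow {β γ : ℝ} (hβ : 0 < β) (hγβ : γ < β) (K κ : ℝ) :
    ∀ᶠ y : ℝ in atTop, K + κ * Real.log y + y ^ γ ≤ y ^ β := by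
  have hconst : (fun _ : ℝ => K) =o[atTop] fun y => y ^ β :=
    Asymptotics.isLittleO_const_left.2
      (Or.inr (tendsto_norm_atTop_atTop.comp (tendsto_rpow_atTop hβ)))
  have hpow : (fun y : ℝ => y ^ γ) =o[atTop] fun y => y ^ β := by
    refine Asymptotics.isLittleO_of_tendsto' ?_ ?_
    · filter_upwards [eventually_gt_atTop 0] with y hy hzero
      exact absurd hzero (rpow_pos_of_pos hy β).ne'
    · refine (tendsto_rpow_neg_atTop (sub_pos.2 hγβ)).congr' ?_
      filter_upwards [eventually_gt_atTop 0] with y hy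
      rw [neg_sub, rpow_sub hy]
  have hsum := (hconst.add ((isLittleO_log_rpow_atTop hβ).const_mul_left κ)).add hpow
  filter_upwards [hsum.def zero_lt_one, eventually_gt_atTop 0] with y hy hy0
  rw [one_mul, norm_of_nonneg (rpow_nonneg hy0.le β)] at hy
  exact (le_norm_self _).trans hy

end LogarithmicOrder

section SaddlePoint

variable {r : ℝ → ℝ} {σ β γ : ℝ}

lemma exp_sub_two_le_mul {ξ v : ℝ} (hξ : 6 ≤ ξ) (hv0 : 0 ≤ v) (hv : expMean (ξ - 1) - 2 ≤ v) :
    rexp (ξ - 2) ≤ ξ * v := by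
  have hmul := mul_expMean (ξ - 1)
  have hexp : rexp (ξ - 1) = rexp 1 * rexp (ξ - 2) := by
    rw [← exp_add]
    ring_nf
  have hquad := quadratic_le_exp_of_nonneg (show 0 ≤ ξ - 2 by linarith)
  have hgrowth : 2 * ξ ≤ rexp (ξ - 2) := by nlinarith
  have htwo : 2 * rexp (ξ - 2) ≤ rexp 1 * rexp (ξ - 2) :=
    mul_le_mul_of_nonneg_right (by linarith [exp_one_gt_d9]) (exp_pos _).le
  have hlower := mul_le_mul_of_nonneg_left hv (show 0 ≤ ξ - 1 by linarith)
  linarith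

lemma tendsto_log_div_of_expMean_le {v : ℝ → ℝ} (hv0 : ∀ ξ ≥ 0, 0 < v ξ)
    (hlower : ∀ ξ ≥ 0, expMean (ξ - 1) - 2 ≤ v ξ) (hupper : ∀ ξ ≥ 0, v ξ ≤ rexp (ξ + 2)) :
    Tendsto (fun ξ => Real.log (v ξ) / ξ) atTop (𝓝 1) := by
  have hinv : Tendsto (fun ξ : ℝ => 2 / ξ) atTop (𝓝 0) := tendsto_const_nhds.div_atTop tendsto_id
  have hlog : Tendsto (fun ξ : ℝ => Real.log ξ / ξ) atTop (𝓝 0) :=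
    isLittleO_log_id_atTop.tendsto_div_nhds_zero
  have hleft : Tendsto (fun ξ : ℝ => 1 - 2 / ξ - Real.log ξ / ξ) atTop (𝓝 1) := by
    simpa using (tendsto_const_nhds.sub hinv).sub hlog
  have hright : Tendsto (fun ξ : ℝ => 1 + 2 / ξ) atTop (𝓝 1) := by
    simpa using tendsto_const_nhds.add hinv
  refine tendsto_of_tendsto_of_tendsto_of_le_of_le' hleft hright ?_ ?_
  · filter_upwards [eventually_ge_atTop 6] with ξ hξ
    have hξ0 : 0 < ξ := by linarith
    have hle := exp_sub_two_le_mul hξ (hv0 ξ hξ0.le).le (hlower ξ hξ0.le)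
    rw [← le_log_iff_exp_le (mul_pos hξ0 (hv0 ξ hξ0.le)),
      log_mul hξ0.ne' (hv0 ξ hξ0.le).ne'] at hle
    rw [le_div_iff₀ hξ0, sub_mul, sub_mul, div_mul_cancel₀ _ hξ0.ne', div_mul_cancel₀ _ hξ0.ne']
    linarith
  · filter_upwards [eventually_gt_atTop 0] with ξ hξ
    have hle := (log_le_iff_le_exp (hv0 ξ hξ.le)).2 (hupper ξ hξ.le)
    rw [div_le_iff₀ hξ, add_mul, div_mul_cancel₀ _ hξ.ne']
    linarith

lemma IsDickman.exists_saddlePoint (hr : IsDickman r) :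
    ∃ v : ℝ → ℝ, Tendsto (fun ξ => Real.log (v ξ) / ξ) atTop (𝓝 1) ∧ ∀ ξ ≥ 0, 0 < v ξ ∧
      expMoment r 0 * rexp (expMeanIntegral ξ) ≤
        2 * rexp (ξ + 2) * (r (v ξ) * rexp (ξ * v ξ)) := by
  choose! v hv using fun ξ (hξ : 0 ≤ ξ) => hr.exists_expMoment_le hξ
  exact ⟨v, tendsto_log_div_of_expMean_le (fun ξ hξ => (hv ξ hξ).1) (fun ξ hξ => (hv ξ hξ).2.1)
    fun ξ hξ => (hv ξ hξ).2.2.1, fun ξ hξ => ⟨(hv ξ hξ).1, (hv ξ hξ).2.2.2⟩⟩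

lemma tendsto_log_mul_log_div_log {v : ℝ → ℝ} {κ : ℝ} (hκ : 0 < κ) (hv0 : ∀ ξ ≥ 0, 0 < v ξ)
    (hv : Tendsto (fun ξ => Real.log (v ξ) / ξ) atTop (𝓝 1)) :
    Tendsto (fun y => Real.log (v (κ * Real.log y) * Real.log y) / Real.log y) atTop (𝓝 κ) := by
  have hlog : Tendsto (fun ξ : ℝ => Real.log ξ / ξ) atTop (𝓝 0) :=
    isLittleO_log_id_atTop.tendsto_div_nhds_zero
  have hlim := ((hv.comp (tendsto_log_atTop.const_mul_atTop hκ)).const_mul κ).add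
    (hlog.comp tendsto_log_atTop)
  rw [mul_one, add_zero] at hlim
  refine hlim.congr' ?_
  filter_upwards [eventually_gt_atTop 1] with y hy
  have hlogy : 0 < Real.log y := log_pos hy
  simp only [Function.comp_apply]
  rw [log_mul (hv0 _ (by positivity)).ne' hlogy.ne']
  field_simp

lemma IsDickman.Psi_rpow_lt (hr : IsDickman r) (hσ : 0 < σ) {y v : ℝ} (hy : 1 < y)
    (hosc : logFriableZeta σ y < expMeanIntegral ((1 - σ) * Real.log y) - y ^ β)
    (hgap : Real.log (2 / expMoment r 0) + 2 + (1 - σ) * Real.log y + y ^ γ ≤ y ^ β)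
    (hsaddle : expMoment r 0 * rexp (expMeanIntegral ((1 - σ) * Real.log y)) ≤
      2 * rexp ((1 - σ) * Real.log y + 2) * (r v * rexp ((1 - σ) * Real.log y * v))) :
    (Psi (y ^ v) y : ℝ) < y ^ v * r v * rexp (-y ^ γ) := by
  have hy0 : 0 < y := zero_lt_one.trans hy
  have hc := hr.expMoment_pos 0
  set c := expMoment r 0
  set ξ := (1 - σ) * Real.log y with hξ
  have hrv := hr.pos v
  have hmoment : rexp (expMeanIntegral ξ) ≤
      rexp (Real.log (2 / c) + 2 + ξ) * (r v * rexp (ξ * v)) := by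
    rw [add_assoc, exp_add, exp_log (by positivity), add_comm 2 ξ]
    refine le_of_mul_le_mul_left (hsaddle.trans_eq ?_) hc
    field_simp
  have hsplit : y ^ v = (y ^ v) ^ σ * rexp (ξ * v) := by
    rw [← rpow_mul hy0.le, rpow_def_of_pos hy0, rpow_def_of_pos hy0, ← exp_add, hξ]
    ring_nf
  have : 0 < (y ^ v) ^ σ := by positivity
  calc (Psi (y ^ v) y : ℝ) ≤ (y ^ v) ^ σ * rexp (logFriableZeta σ y) :=
        Psi_le_rpow_mul_exp_logFriableZeta hσ (rpow_nonneg hy0.le v)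
    _ < (y ^ v) ^ σ * rexp (expMeanIntegral ξ - y ^ β) := by gcongr
    _ = (y ^ v) ^ σ * rexp (expMeanIntegral ξ) * rexp (-y ^ β) := by
        rw [sub_eq_add_neg, exp_add, mul_assoc]
    _ ≤ (y ^ v) ^ σ * (rexp (Real.log (2 / c) + 2 + ξ) * (r v * rexp (ξ * v))) *
          rexp (-y ^ β) := by gcongr
    _ = y ^ v * r v * rexp (Real.log (2 / c) + 2 + ξ + -y ^ β) := by
        rw [exp_add _ (-y ^ β)]
        linear_combination -(r v * rexp (Real.log (2 / c) + 2 + ξ) * rexp (-y ^ β)) * hsplit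
    _ ≤ y ^ v * r v * rexp (-y ^ γ) := by
        gcongr
        linarith

lemma IsDickman.exists_frequently_Psi_lt (hr : IsDickman r) (hσ : 0 < σ) (hσ1 : σ < 1)
    (hβ : 0 < β) (hγβ : γ < β)
    (hosc : ∃ᶠ y in atTop,
      logFriableZeta σ y < expMeanIntegral ((1 - σ) * Real.log y) - y ^ β) :
    ∃ x : ℝ → ℝ, Tendsto x atTop atTop ∧
      (∀ η > 0, ∀ᶠ y in atTop, Real.log (x y) ^ (1 / (1 - σ) - η) ≤ y ∧
        y ≤ Real.log (x y) ^ (1 / (1 - σ) + η)) ∧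
      ∃ᶠ y in atTop, 0 ≤ Real.log (x y) / Real.log y ∧
        (Psi (x y) y : ℝ) < x y * r (Real.log (x y) / Real.log y) * rexp (-y ^ γ) := by
  have hκ : 0 < 1 - σ := sub_pos.2 hσ1
  obtain ⟨v, hvlim, hv⟩ := hr.exists_saddlePoint
  let x (y : ℝ) : ℝ := y ^ v ((1 - σ) * Real.log y)
  have hlogx : ∀ᶠ y in atTop, Real.log (x y) = v ((1 - σ) * Real.log y) * Real.log y ∧
      0 < v ((1 - σ) * Real.log y) * Real.log y := by
    filter_upwards [eventually_gt_atTop 1] with y hy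
    have hlogy : 0 < Real.log y := log_pos hy
    exact ⟨log_rpow (by linarith) _, mul_pos (hv _ (by positivity)).1 hlogy⟩
  have hlogx0 : ∀ᶠ y in atTop, 0 < Real.log (x y) := hlogx.mono fun y hy => hy.1 ▸ hy.2
  have horder : Tendsto (fun y => Real.log (Real.log (x y)) / Real.log y) atTop (𝓝 (1 - σ)) :=
    (tendsto_log_mul_log_div_log hκ (fun ξ hξ => (hv ξ hξ).1) hvlim).congr'
      (hlogx.mono fun y hy => by simp only [hy.1])
  refine ⟨x, ?_, fun η hη => eventually_rpow_le_and_le_rpow hκ hlogx0 horder hη,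
    (hosc.and_eventually ((eventually_gt_atTop 1).and
      (eventually_add_mul_log_add_rpow_le_rpow hβ hγβ (Real.log (2 / expMoment r 0) + 2)
        (1 - σ)))).mono ?_⟩
  · refine (tendsto_exp_atTop.comp
      (tendsto_atTop_of_tendsto_log_div_log hκ hlogx0 horder)).congr' ?_
    filter_upwards [eventually_gt_atTop 0] with y hy using exp_log (rpow_pos_of_pos hy _)
  · rintro y ⟨hoscy, hy, hgap⟩
    have hlogy : 0 < Real.log y := log_pos hy
    have hvy := hv ((1 - σ) * Real.log y) (by positivity)
    rw [log_rpow (by linarith), mul_div_cancel_right₀ _ hlogy.ne']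
    exact ⟨hvy.1.le, hr.Psi_rpow_lt hσ hy hoscy hgap hvy.2⟩

end SaddlePoint

section ZetaZeros

lemma Theta_le_one : Theta ≤ 1 :=
  Real.sSup_le (by rintro _ ⟨z, hz, rfl⟩; exact hz.2.2.le) zero_le_one

lemma exists_riemannZeta_eq_zero_of_lt_Theta {a : ℝ} (ha : 0 ≤ a) (haΘ : a < Theta) :
    ∃ z : ℂ, riemannZeta z = 0 ∧ a < z.re ∧ z.re < 1 := by
  have hne : (Complex.re '' {z : ℂ | riemannZeta z = 0 ∧ 0 < z.re ∧ z.re < 1}).Nonempty := by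
    by_contra! hempty
    rw [Theta, hempty, Real.sSup_empty] at haΘ
    exact ha.not_gt haΘ
  obtain ⟨_, ⟨z, hz, rfl⟩, haz⟩ := exists_lt_of_lt_csSup hne haΘ
  exact ⟨z, hz.1, haz, hz.2.2⟩

end ZetaZeros

end FriableDeficit

/-- If RH fails, then for fixed `σ₀ ∈ (1-Θ,Θ)` and `ε > 0` there are sequences
`xₙ → ∞`, `yₙ → ∞` with `yₙ = (log xₙ)^{1/(1-σ₀)+o(1)}` along which
`Ψ(xₙ,yₙ) < xₙ ρ(log xₙ/log yₙ) exp(-yₙ^{Θ-σ₀-ε})`.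
The Dickman function `ρ` is characterized by the hypotheses. -/
theorem stmt2 (ρ : ℝ → ℝ) (hρ_cont : ContinuousOn ρ (Set.Ici 0))
    (hρ_one : ∀ t ∈ Set.Icc (0 : ℝ) 1, ρ t = 1)
    (hρ_eq : ∀ t ≥ (1 : ℝ), ρ t = 1 - ∫ v in (1 : ℝ)..t, ρ (v - 1) / v)
    (hRH : ¬ RiemannHypothesis)
    (σ₀ : ℝ) (hσ₀l : 1 - Theta < σ₀) (hσ₀r : σ₀ < Theta)
    (ε : ℝ) (hε : 0 < ε) :
    ∃ x y δ : ℕ → ℝ,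
      Tendsto x atTop atTop ∧ Tendsto y atTop atTop ∧
      (∀ n, 0 < δ n) ∧ Tendsto δ atTop (nhds 0) ∧
      ∀ n, (Real.log (x n)) ^ (1 / (1 - σ₀) - δ n) ≤ y n ∧
        y n ≤ (Real.log (x n)) ^ (1 / (1 - σ₀) + δ n) ∧
        (Psi (x n) (y n) : ℝ) < x n * ρ (Real.log (x n) / Real.log (y n)) *
          Real.exp (-(y n) ^ (Theta - σ₀ - ε)) := by
  have hΘ : Theta ≤ 1 := Theta_le_one
  have hσ : 0 < σ₀ := by linarith
  obtain ⟨β, hβl, hβΘ⟩ : ∃ β, max (max 0 (1 - 2 * σ₀)) (Theta - σ₀ - ε) < β ∧ β < Theta - σ₀ :=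
    exists_between (max_lt (max_lt (by linarith) (by linarith)) (by linarith))
  obtain ⟨⟨hβ, hβσ⟩, hεβ⟩ : (0 < β ∧ 1 - 2 * σ₀ < β) ∧ Theta - σ₀ - ε < β := by
    simpa only [max_lt_iff] using hβl
  obtain ⟨z, hz, hβz, hz1⟩ :=
    exists_riemannZeta_eq_zero_of_lt_Theta (a := β + σ₀) (by linarith) (by linarith)
  obtain ⟨X, hX, hX_order, hX_freq⟩ :=
    (isDickman_comp_max hρ_cont hρ_one hρ_eq).exists_frequently_Psi_lt hσ (by linarith) hβ hεβ
      (frequently_logFriableZeta_lt hσ hβ hβσ hz hz1 hβz)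
  choose y hy_freq hy_order hy_ge using fun n : ℕ =>
    (hX_freq.and_eventually ((hX_order (1 / ((n : ℝ) + 1)) (by positivity)).and
      (eventually_ge_atTop (n : ℝ)))).exists
  have hy : Tendsto y atTop atTop := tendsto_atTop_mono hy_ge tendsto_natCast_atTop_atTop
  refine ⟨X ∘ y, y, fun n => 1 / ((n : ℝ) + 1), hX.comp hy, hy, fun n => by positivity,
    tendsto_one_div_add_atTop_nhds_zero_nat, fun n => ⟨(hy_order n).1, (hy_order n).2, ?_⟩⟩
  obtain ⟨hu, hΨ⟩ := hy_freq n
  rwa [max_eq_left hu] at hΨ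
end

section
/- The function Z is strictly decreasing on (0,1]: for all real t₁, t₂ with 0 < t₁ < t₂ ≤ 1 one has Z(t₁) > Z(t₂). -/
open Real

/-- `Z(t) = ζ(t)(t-1)/t` for `t ∈ (0,1)`, with `Z(1) = 1`. -/
noncomputable def Zfun (t : ℝ) : ℝ :=
  if t = 1 then 1 else (riemannZeta (t : ℂ)).re * (t - 1) / t

/-!
Abel summation gives `ζ(s) = s / (s - 1) - s ∫₁^∞ {x} x^(-s-1) dx` for `Re s > 1`. The integral is
holomorphic on `Re s > 0`, so there the identity persists after multiplication by `s - 1`, and on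
the positive reals it reads `Z(t) = 1 + (1 - t) ∫₁^∞ {x} x^(-t-1) dx`. On `(0, 1]` the factor
`1 - t` is nonnegative and strictly decreasing, while the integral is positive and decreasing.
-/

open Set MeasureTheory Filter Asymptotics Topology

section Mellin

variable {E : Type*} [NormedAddCommGroup E] [NormedSpace ℂ E]

theorem mellin_indicator_Ioi (f : ℝ → E) {a : ℝ} (ha : 0 ≤ a) (s : ℂ) :
    mellin ((Ioi a).indicator f) s = ∫ x in Ioi a, (x : ℂ) ^ (s - 1) • f x := by
  simp only [mellin, ← indicator_smul]
  rw [setIntegral_indicator measurableSet_Ioi, inter_eq_right.mpr (Ioi_subset_Ioi ha)]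

theorem differentiableAt_setIntegral_Ioi_cpow_smul {f : ℝ → E} {a c : ℝ} (ha : 0 < a)
    (hf : LocallyIntegrableOn f (Ioi 0)) (hfc : f =O[atTop] fun x : ℝ ↦ x ^ (-c))
    {s : ℂ} (hs : s.re < c) :
    DifferentiableAt ℂ (fun s : ℂ ↦ ∫ x in Ioi a, (x : ℂ) ^ (s - 1) • f x) s := by
  have indicator_isBigO_top : (Ioi a).indicator f =O[atTop] fun x : ℝ ↦ x ^ (-c) :=
    (isBigO_of_le _ fun x ↦ norm_indicator_le_norm_self f x).trans hfc
  have indicator_eventuallyEq_zero : (Ioi a).indicator f =ᶠ[𝓝[>] 0] 0 := by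
    filter_upwards [mem_nhdsWithin_of_mem_nhds (Iio_mem_nhds ha)] with x hx
    exact indicator_of_notMem (not_lt.mpr (le_of_lt hx)) f
  have indicator_isBigO_zero : (Ioi a).indicator f =O[𝓝[>] 0] fun x : ℝ ↦ x ^ (-(s.re - 1)) :=
    indicator_eventuallyEq_zero.trans_isBigO (isBigO_zero _ _)
  have indicator_locallyIntegrableOn : LocallyIntegrableOn ((Ioi a).indicator f) (Ioi 0) := by
    intro x hx
    obtain ⟨u, hu, hfu⟩ := hf x hx
    exact ⟨u, hu, hfu.indicator measurableSet_Ioi⟩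
  simp only [← mellin_indicator_Ioi f ha.le]
  exact mellin_differentiableAt_of_isBigO_rpow indicator_locallyIntegrableOn indicator_isBigO_top hs
    indicator_isBigO_zero (sub_one_lt s.re)

end Mellin

theorem monotoneOn_setIntegral_rpow_mul {S : Set ℝ} {f : ℝ → ℝ} (hS : MeasurableSet S)
    (one_le : ∀ x ∈ S, 1 ≤ x) (hf : ∀ x ∈ S, 0 ≤ f x) :
    MonotoneOn (fun r : ℝ ↦ ∫ x in S, x ^ r * f x)
      {r | IntegrableOn (fun x : ℝ ↦ x ^ r * f x) S} := fun _ hp _ hq hpq ↦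
  setIntegral_mono_on hp hq hS fun x hx ↦
    mul_le_mul_of_nonneg_right (rpow_le_rpow_of_exponent_le (one_le x hx) hpq) (hf x hx)

theorem norm_fract_le_one (x : ℝ) : ‖Int.fract x‖ ≤ 1 := by
  rw [norm_of_nonneg (Int.fract_nonneg x)]
  exact (Int.fract_lt_one x).le

theorem norm_ofReal_fract_le_one (x : ℝ) : ‖((Int.fract x : ℝ) : ℂ)‖ ≤ 1 := by
  rw [Complex.norm_real]
  exact norm_fract_le_one x

theorem measurable_ofReal_fract : Measurable fun x : ℝ ↦ ((Int.fract x : ℝ) : ℂ) :=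
  Complex.measurable_ofReal.comp measurable_fract

theorem locallyIntegrable_ofReal_fract :
    LocallyIntegrable fun x : ℝ ↦ ((Int.fract x : ℝ) : ℂ) :=
  (locallyIntegrable_const (1 : ℝ)).mono measurable_ofReal_fract.aestronglyMeasurable <|
    .of_forall fun x ↦ by simpa only [norm_one] using norm_ofReal_fract_le_one x

theorem integrableOn_Ioi_cpow_mul_fract {a : ℝ} (ha : 0 < a) {s : ℂ} (hs : s.re < -1) :
    IntegrableOn (fun x : ℝ ↦ (x : ℂ) ^ s * (Int.fract x : ℝ)) (Ioi a) :=
  (integrableOn_Ioi_cpow_of_lt hs ha).mul_bdd measurable_ofReal_fract.aestronglyMeasurable <|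
    .of_forall norm_ofReal_fract_le_one

theorem integrableOn_Ioi_rpow_mul_fract {a : ℝ} (ha : 0 < a) {r : ℝ} (hr : r < -1) :
    IntegrableOn (fun x : ℝ ↦ x ^ r * Int.fract x) (Ioi a) :=
  (integrableOn_Ioi_rpow_of_lt hr ha).mul_bdd measurable_fract.aestronglyMeasurable <|
    .of_forall norm_fract_le_one

/-- The integral `∫₁^∞ {x} x^(-s-1) dx`, which carries the deviation of `ζ(s)` from `s / (s - 1)`.
It converges for `0 < Re s`; elsewhere the integrand is not integrable and the value is the
default `0`. -/
noncomputable def fractIntegral (s : ℂ) : ℂ :=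
  ∫ x in Ioi (1 : ℝ), (x : ℂ) ^ (-s - 1) * (Int.fract x : ℝ)

theorem differentiableAt_fractIntegral {s : ℂ} (hs : 0 < s.re) :
    DifferentiableAt ℂ fractIntegral s := by
  have fract_isBigO : (fun x : ℝ ↦ ((Int.fract x : ℝ) : ℂ)) =O[atTop]
      fun x : ℝ ↦ x ^ (-(0 : ℝ)) :=
    .of_bound 1 <| .of_forall fun x ↦ by simpa using norm_fract_le_one x
  have differentiableAt_neg_s := differentiableAt_setIntegral_Ioi_cpow_smul (s := -s) one_pos
    (locallyIntegrable_ofReal_fract.locallyIntegrableOn _) fract_isBigO (by simpa using hs)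
  exact differentiableAt_neg_s.comp s differentiableAt_id.neg

/-- The restriction of `fractIntegral` to the real axis, as a real integral. -/
noncomputable def fractIntegralReal (t : ℝ) : ℝ :=
  ∫ x in Ioi (1 : ℝ), x ^ (-t - 1) * Int.fract x

theorem fractIntegral_ofReal (t : ℝ) : fractIntegral t = fractIntegralReal t := by
  rw [fractIntegralReal, ← integral_complex_ofReal]
  refine setIntegral_congr_fun measurableSet_Ioi fun x hx ↦ ?_
  have x_nonneg : 0 ≤ x := zero_le_one.trans (le_of_lt hx)
  simp [Complex.ofReal_cpow x_nonneg]

theorem antitoneOn_fractIntegralReal : AntitoneOn fractIntegralReal (Ioi 0) := by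
  intro a (ha : 0 < a) b (hb : 0 < b) hab
  exact monotoneOn_setIntegral_rpow_mul measurableSet_Ioi (fun _ hx ↦ le_of_lt hx)
    (fun x _ ↦ Int.fract_nonneg x)
    (integrableOn_Ioi_rpow_mul_fract one_pos (by linarith))
    (integrableOn_Ioi_rpow_mul_fract one_pos (by linarith)) (by linarith)

theorem fractIntegralReal_pos {t : ℝ} (ht : 0 < t) : 0 < fractIntegralReal t := by
  have integrand_nonneg :
      0 ≤ᵐ[volume.restrict (Ioi 1)] fun x : ℝ ↦ x ^ (-t - 1) * Int.fract x :=
    (ae_restrict_iff' measurableSet_Ioi).mpr <| .of_forall fun x hx ↦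
      mul_nonneg (rpow_nonneg (zero_le_one.trans (le_of_lt hx)) _) (Int.fract_nonneg x)
  have Ioo_subset_support :
      Ioo 1 2 ⊆ (Function.support fun x : ℝ ↦ x ^ (-t - 1) * Int.fract x) ∩ Ioi 1 := by
    intro x ⟨one_lt, lt_two⟩
    have fract_eq : Int.fract x = x - 1 :=
      Int.fract_eq_iff.mpr ⟨by linarith, by linarith, 1, by simp⟩
    refine ⟨(mul_pos (rpow_pos_of_pos (by linarith) _) ?_).ne', one_lt⟩
    rw [fract_eq]
    exact sub_pos.mpr one_lt
  rw [fractIntegralReal, setIntegral_pos_iff_support_of_nonneg_ae integrand_nonneg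
    (integrableOn_Ioi_rpow_mul_fract one_pos (by linarith))]
  exact lt_of_lt_of_le (by simp) (measure_mono Ioo_subset_support)

theorem riemannZeta_eq_mul_integral_natFloor {s : ℂ} (hs : 1 < s.re) :
    riemannZeta s = s * ∫ x in Ioi (1 : ℝ), (⌊x⌋₊ : ℂ) * (x : ℂ) ^ (-(s + 1)) := by
  have partialSums_isBigO :
      (fun n : ℕ ↦ ∑ k ∈ Finset.Icc 1 n, ‖(1 : ℕ → ℂ) k‖) =O[atTop] fun n ↦ (n : ℝ) ^ (1 : ℝ) :=
    isBigO_of_le _ fun n ↦ by simp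
  simpa [LSeries_one_eq_riemannZeta hs] using
    LSeries_eq_mul_integral' (1 : ℕ → ℂ) zero_le_one hs partialSums_isBigO

theorem natFloor_mul_cpow_neg_add_one {x : ℝ} (hx : 0 < x) (s : ℂ) :
    (⌊x⌋₊ : ℂ) * (x : ℂ) ^ (-(s + 1)) =
      (x : ℂ) ^ (-s) - (x : ℂ) ^ (-s - 1) * (Int.fract x : ℝ) := by
  have floor_eq : (⌊x⌋₊ : ℂ) = x - (Int.fract x : ℝ) := by
    have floor_eq_real : (⌊x⌋₊ : ℝ) = x - Int.fract x := by
      rw [natCast_floor_eq_intCast_floor hx.le, Int.self_sub_fract]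
    exact_mod_cast congrArg Complex.ofReal floor_eq_real
  have cpow_eq : (x : ℂ) ^ (-s) = (x : ℂ) ^ (-s - 1) * x := by
    have x_ne_zero : (x : ℂ) ≠ 0 := Complex.ofReal_ne_zero.mpr hx.ne'
    rw [Complex.cpow_sub _ _ x_ne_zero, Complex.cpow_one, div_mul_cancel₀ _ x_ne_zero]
  rw [floor_eq, cpow_eq, neg_add']
  ring

theorem riemannZeta_eq_div_sub_mul_fractIntegral {s : ℂ} (hs : 1 < s.re) :
    riemannZeta s = s / (s - 1) - s * fractIntegral s := by
  have integral_cpow : ∫ x in Ioi (1 : ℝ), (x : ℂ) ^ (-s) = 1 / (s - 1) := by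
    rw [integral_Ioi_cpow_of_lt (by simpa using hs) one_pos, Complex.ofReal_one,
      Complex.one_cpow, neg_div, ← div_neg, neg_add', neg_neg]
  have neg_sub_one_re_lt : (-s - 1).re < -1 := by
    simp only [Complex.sub_re, Complex.neg_re, Complex.one_re]
    linarith
  have integral_natFloor :
      ∫ x in Ioi (1 : ℝ), (⌊x⌋₊ : ℂ) * (x : ℂ) ^ (-(s + 1)) = 1 / (s - 1) - fractIntegral s := by
    rw [← integral_cpow, fractIntegral, ← integral_sub
      (integrableOn_Ioi_cpow_of_lt (by simpa using hs) one_pos)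
      (integrableOn_Ioi_cpow_mul_fract one_pos neg_sub_one_re_lt)]
    exact setIntegral_congr_fun measurableSet_Ioi fun x hx ↦
      natFloor_mul_cpow_neg_add_one (one_pos.trans hx) s
  rw [riemannZeta_eq_mul_integral_natFloor hs, integral_natFloor]
  ring

theorem riemannZeta₁_eq_sub_mul_fractIntegral {s : ℂ} (hs : 0 < s.re) :
    riemannZeta₁ s = s - (s - 1) * s * fractIntegral s := by
  have isOpen_halfPlane (a : ℝ) : IsOpen {z : ℂ | a < z.re} :=
    isOpen_lt continuous_const Complex.continuous_re
  have rhs_differentiableOn :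
      DifferentiableOn ℂ (fun z ↦ z - (z - 1) * z * fractIntegral z) {z | 0 < z.re} := fun z hz ↦
    have := differentiableAt_fractIntegral hz
    DifferentiableAt.differentiableWithinAt (by fun_prop)
  have eventuallyEq_near_two :
      riemannZeta₁ =ᶠ[𝓝 2] fun z ↦ z - (z - 1) * z * fractIntegral z := by
    filter_upwards [(isOpen_halfPlane 1).mem_nhds (x := 2) (by simp)] with z one_lt_re
    have z_ne_one : z ≠ 1 := by
      rintro rfl
      simp at one_lt_re
    have z_sub_one_ne_zero : z - 1 ≠ 0 := sub_ne_zero.mpr z_ne_one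
    have zeta_eq := riemannZeta_eq_inv_sub_mul z_ne_one
    rw [riemannZeta_eq_div_sub_mul_fractIntegral one_lt_re] at zeta_eq
    field_simp at zeta_eq
    linear_combination -zeta_eq
  exact (differentiable_riemannZeta₁.differentiableOn.analyticOnNhd
    (isOpen_halfPlane 0)).eqOn_of_preconnected_of_eventuallyEq
    (rhs_differentiableOn.analyticOnNhd (isOpen_halfPlane 0))
    (convex_halfSpace_re_gt 0).isPreconnected (by simp) eventuallyEq_near_two hs

theorem Zfun_eq_one_add_mul_fractIntegralReal {t : ℝ} (ht : 0 < t) :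
    Zfun t = 1 + (1 - t) * fractIntegralReal t := by
  rcases eq_or_ne t 1 with rfl | t_ne_one
  · simp [Zfun]
  have zeta_eq : riemannZeta t =
      (((t - 1)⁻¹ * (t - (t - 1) * t * fractIntegralReal t) : ℝ) : ℂ) := by
    rw [riemannZeta_eq_inv_sub_mul (Complex.ofReal_ne_one.mpr t_ne_one),
      riemannZeta₁_eq_sub_mul_fractIntegral (by simpa using ht), fractIntegral_ofReal]
    push_cast
    rfl
  have t_sub_one_ne_zero : t - 1 ≠ 0 := sub_ne_zero.mpr t_ne_one
  rw [Zfun, if_neg t_ne_one, zeta_eq, Complex.ofReal_re]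
  field_simp
  ring

/-- `Z` is strictly decreasing on `(0,1]`. -/
theorem stmt5 : ∀ t₁ t₂ : ℝ, 0 < t₁ → t₁ < t₂ → t₂ ≤ 1 → Zfun t₂ < Zfun t₁ := by
  intro t₁ t₂ ht₁ ht₁₂ ht₂
  have ht₂_pos : 0 < t₂ := ht₁.trans ht₁₂
  calc
    Zfun t₂ = 1 + (1 - t₂) * fractIntegralReal t₂ := Zfun_eq_one_add_mul_fractIntegralReal ht₂_pos
    _ ≤ 1 + (1 - t₂) * fractIntegralReal t₁ := by
      gcongr
      exact antitoneOn_fractIntegralReal ht₁ ht₂_pos ht₁₂.le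
    _ < 1 + (1 - t₁) * fractIntegralReal t₁ := by
      gcongr
      exact fractIntegralReal_pos ht₁
    _ = Zfun t₁ := (Zfun_eq_one_add_mul_fractIntegralReal ht₁).symm
end

section
/- There are absolute constants c, C > 0 such that uniformly for all x ≥ y ≥ 2 (so that u = log x/log y ≥ 1): c · u log(u+1) ≤ y^{1−σ} ≤ C · u log(u+1), where σ = 1 − ξ(u)/log y. -/
open Real

/-!
Since `sinh (t / 2) ≥ t / 2` and `exp (-t) ≥ 1 - t`, every `t > 0` satisfies
`exp (t / 2) ≤ (exp t - 1) / t ≤ exp t`. At `t = ξ u` the quotient is `u`, so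
`log u ≤ ξ u ≤ 2 * log u`, and hence `1 + u * log u ≤ exp (ξ u) ≤ 1 + 2 * (u * log u)`. Finally
`u * (log (u + 1) - log u)` lies between `1 / 2` and `1` for `u ≥ 1`, which absorbs the constant
term into `u * log (u + 1)`. As `y ^ (1 - σ) = exp (ξ u)`, the theorem holds with `c = 1` and
`C = 2`.
-/

theorem mul_exp_half_le_exp_sub_one {t : ℝ} (ht : 0 ≤ t) : t * exp (t / 2) ≤ exp t - 1 :=
  calc
    t * exp (t / 2) = 2 * (t / 2) * exp (t / 2) := by ring
    _ ≤ 2 * sinh (t / 2) * exp (t / 2) := by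
      gcongr
      exact self_le_sinh_iff.mpr (by positivity)
    _ = exp (t / 2 + t / 2) - exp (-(t / 2) + t / 2) := by
      rw [sinh_eq, exp_add, exp_add]
      ring
    _ = exp t - 1 := by rw [add_halves, neg_add_cancel, exp_zero]

theorem exp_sub_one_le_mul_exp (t : ℝ) : exp t - 1 ≤ t * exp t := by
  have h : (1 - t) * exp t ≤ exp (-t) * exp t := by
    gcongr
    exact one_sub_le_exp_neg t
  rw [← exp_add, neg_add_cancel, exp_zero] at h
  linarith

theorem mul_log_add_one_sub_log_le_one {u : ℝ} (hu : 0 < u) :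
    u * (log (u + 1) - log u) ≤ 1 := by
  rw [← log_div (by positivity) hu.ne']
  calc
    u * log ((u + 1) / u) ≤ u * ((u + 1) / u - 1) := by
      gcongr
      exact log_le_sub_one_of_pos (by positivity)
    _ = 1 := by
      field_simp
      ring

theorem half_le_mul_log_add_one_sub_log {u : ℝ} (hu : 1 ≤ u) :
    1 / 2 ≤ u * (log (u + 1) - log u) := by
  rw [← log_div (by positivity) (by positivity)]
  calc
    1 / 2 ≤ u * (1 - ((u + 1) / u)⁻¹) := by
      field_simp
      linarith
    _ ≤ u * log ((u + 1) / u) := by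
      gcongr
      exact one_sub_inv_le_log_of_pos (by positivity)

theorem rpow_div_log {y : ℝ} (hy : 1 < y) (a : ℝ) : y ^ (a / log y) = exp a := by
  rw [rpow_def_of_pos (by positivity), mul_div_cancel₀ a (log_pos hy).ne']

section ExpEqOneAddMul

variable {u t : ℝ}

theorem log_le_of_exp_eq_one_add_mul (hu : 0 < u) (ht : 0 < t) (h : exp t = 1 + u * t) :
    log u ≤ t := by
  rw [log_le_iff_le_exp hu]
  refine le_of_mul_le_mul_left ?_ ht
  linarith [exp_sub_one_le_mul_exp t]

theorem le_two_mul_log_of_exp_eq_one_add_mul (hu : 0 < u) (ht : 0 < t)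
    (h : exp t = 1 + u * t) : t ≤ 2 * log u := by
  have exp_half_le : exp (t / 2) ≤ u := by
    refine le_of_mul_le_mul_left ?_ ht
    linarith [mul_exp_half_le_exp_sub_one ht.le]
  linarith [(le_log_iff_exp_le hu).mpr exp_half_le]

theorem mul_log_add_one_le_exp (hu : 0 < u) (hlog : log u ≤ t) (h : exp t = 1 + u * t) :
    u * log (u + 1) ≤ exp t :=
  calc
    u * log (u + 1) = u * (log (u + 1) - log u) + u * log u := by ring
    _ ≤ 1 + u * t := by
      gcongr
      exact mul_log_add_one_sub_log_le_one hu
    _ = exp t := h.symm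

theorem exp_le_two_mul_mul_log_add_one (hu : 1 ≤ u) (hlog : t ≤ 2 * log u)
    (h : exp t = 1 + u * t) : exp t ≤ 2 * (u * log (u + 1)) :=
  calc
    exp t = 1 + u * t := h
    _ ≤ 1 + u * (2 * log u) := by gcongr
    _ = 2 * (1 / 2 + u * log u) := by ring
    _ ≤ 2 * (u * (log (u + 1) - log u) + u * log u) := by
      gcongr
      exact half_le_mul_log_add_one_sub_log hu
    _ = 2 * (u * log (u + 1)) := by ring

end ExpEqOneAddMul

theorem stmt12_general (ξ : ℝ → ℝ) (hξ_one : ξ 1 = 0)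
    (hξ : ∀ u > (1 : ℝ), 0 < ξ u ∧ exp (ξ u) = 1 + u * ξ u) {x y : ℝ} (hy : 1 < y)
    (hyx : y ≤ x) :
    let u := log x / log y
    let s := 1 - ξ u / log y
    u * log (u + 1) ≤ y ^ (1 - s) ∧ y ^ (1 - s) ≤ 2 * (u * log (u + 1)) := by
  intro u s
  have one_le_u : 1 ≤ u := (one_le_div (log_pos hy)).mpr (log_le_log (by positivity) hyx)
  have rpow_eq : y ^ (1 - s) = exp (ξ u) := by rw [sub_sub_cancel, rpow_div_log hy]
  have ξ_spec : exp (ξ u) = 1 + u * ξ u ∧ log u ≤ ξ u ∧ ξ u ≤ 2 * log u := by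
    rcases one_le_u.eq_or_lt with u_eq_one | one_lt_u
    · simp [← u_eq_one, hξ_one]
    · obtain ⟨ξ_pos, exp_ξ⟩ := hξ u one_lt_u
      exact ⟨exp_ξ, log_le_of_exp_eq_one_add_mul (by positivity) ξ_pos exp_ξ,
        le_two_mul_log_of_exp_eq_one_add_mul (by positivity) ξ_pos exp_ξ⟩
  obtain ⟨exp_ξ, log_le_ξ, ξ_le⟩ := ξ_spec
  rw [rpow_eq]
  exact ⟨mul_log_add_one_le_exp (by positivity) log_le_ξ exp_ξ,
    exp_le_two_mul_mul_log_add_one one_le_u ξ_le exp_ξ⟩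

/-- Uniformly for `x ≥ y ≥ 2` one has `y^{1-σ} ≍ u log(u+1)`, where `u = log x/log y`
and `σ = 1 - ξ(u)/log y`. The function `ξ` is characterized by the hypotheses. -/
theorem stmt12 (ξ : ℝ → ℝ) (hξ_one : ξ 1 = 0)
    (hξ : ∀ u > (1 : ℝ), 0 < ξ u ∧ Real.exp (ξ u) = 1 + u * ξ u) :
    ∃ c C : ℝ, 0 < c ∧ 0 < C ∧
      ∀ x y : ℝ, 2 ≤ y → y ≤ x →
      (let u := Real.log x / Real.log y
       let s := 1 - ξ u / Real.log y
       c * (u * Real.log (u + 1)) ≤ y ^ (1 - s) ∧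
         y ^ (1 - s) ≤ C * (u * Real.log (u + 1))) := by
  refine ⟨1, 2, one_pos, two_pos, fun x y hy hyx => ?_⟩
  simpa only [one_mul] using stmt12_general ξ hξ_one hξ (one_lt_two.trans_le hy) hyx
end

section
/- Fix s₀ ∈ (0,1). For every real s > 1 − s₀: ∫₁^∞ A₁(x) x^{−s−1} dx = (1/s)·log ζ(s+s₀) and ∫₁^∞ A₂(x) x^{−s−1} dx = (1/s)·log( s/(s+s₀−1) ), where A₁(x) := Σ_{n ≤ x} Λ(n)/( n^{s₀} log n ) and A₂(x) := I((1−s₀) log x). -/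
open Real MeasureTheory
open scoped ArithmeticFunction.vonMangoldt

/-- `I(s) = ∫₀^s (e^v - 1)/v dv`. -/
noncomputable def Ifun (s : ℝ) : ℝ := ∫ v in (0 : ℝ)..s, (Real.exp v - 1) / v

/-- `A₁(x) = ∑_{n ≤ x} Λ(n)/(n^{s₀} log n)`. -/
noncomputable def A1 (s₀ x : ℝ) : ℝ :=
  ∑ n ∈ Finset.Icc 1 ⌊x⌋₊, Λ n / ((n : ℝ) ^ s₀ * Real.log n)

/-- `A₂(x) = I((1-s₀) log x)`. -/
noncomputable def A2 (s₀ x : ℝ) : ℝ := Ifun ((1 - s₀) * Real.log x)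

/-!
Both `A₁` and `A₂` are superpositions of functions whose Mellin transform is elementary, so each
formula follows by integrating term by term. For `A₁`, the summand `n` contributes
`∫_n^∞ x^(-s-1) dx = n^(-s) / s`, which leaves the Dirichlet series of `log ζ`. For `A₂`, the
substitution `v = y log x` gives `I(c log x) = ∫₀^c (x^y - 1) / y dy`; each integrand is
nonnegative for `x > 1`, which justifies Fubini, and has transform `1 / (s (s - y))`; integrating
this over `y` gives the logarithm.
-/

lemma hasSum_indicator_Ici_smul {R M : Type*} [Semiring R] [AddCommMonoid M] [TopologicalSpace M]
    [Module R M] (w : ℝ → R) (a : ℕ → M) {x : ℝ} (hx : 0 ≤ x) :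
    HasSum (fun n : ℕ ↦ (Set.Ici ((n + 1 : ℕ) : ℝ)).indicator w x • a (n + 1))
      (w x • ∑ n ∈ Finset.Icc 1 ⌊x⌋₊, a n) := by
  have mem_Ici_iff (n : ℕ) : x ∈ Set.Ici ((n + 1 : ℕ) : ℝ) ↔ n ∈ Finset.range ⌊x⌋₊ := by
    rw [Set.mem_Ici, ← Nat.le_floor_iff hx, Finset.mem_range, Nat.succ_le_iff]
  have sum_eq : w x • ∑ n ∈ Finset.Icc 1 ⌊x⌋₊, a n = ∑ n ∈ Finset.range ⌊x⌋₊,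
      (Set.Ici ((n + 1 : ℕ) : ℝ)).indicator w x • a (n + 1) := by
    rw [← Finset.Ico_add_one_right_eq_Icc, Finset.sum_Ico_eq_sum_range, Finset.smul_sum]
    refine Finset.sum_congr rfl fun n hn ↦ ?_
    rw [Set.indicator_of_mem ((mem_Ici_iff n).2 hn), add_comm 1 n]
  rw [sum_eq]
  exact hasSum_sum_of_ne_finset_zero fun n hn ↦ by
    rw [Set.indicator_of_notMem (mt (mem_Ici_iff n).1 hn), zero_smul]

lemma integral_Ioi_one_indicator_Ici_rpow {s : ℝ} (hs : 0 < s) {b : ℝ} (hb : 1 ≤ b) :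
    ∫ x in Set.Ioi (1 : ℝ), (Set.Ici b).indicator (fun x ↦ x ^ (-s - 1)) x = s⁻¹ * b ^ (-s) := by
  rw [← integral_Ici_eq_integral_Ioi, setIntegral_indicator measurableSet_Ici,
    Set.Ici_inter_Ici, sup_eq_right.2 hb, integral_Ici_eq_integral_Ioi,
    integral_Ioi_rpow_of_lt (by linarith) (by linarith), sub_add_cancel, neg_div_neg_eq,
    div_eq_inv_mul]

theorem integral_rpow_smul_sum_Icc_floor {E : Type*} [NormedAddCommGroup E] [NormedSpace ℝ E]
    [CompleteSpace E] {s : ℝ} (hs : 0 < s) {a : ℕ → E}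
    (ha : Summable fun n : ℕ ↦ (n : ℝ) ^ (-s) * ‖a n‖) :
    ∫ x in Set.Ioi (1 : ℝ), x ^ (-s - 1) • ∑ n ∈ Finset.Icc 1 ⌊x⌋₊, a n =
      s⁻¹ • ∑' n : ℕ, (n : ℝ) ^ (-s) • a n := by
  let K (n : ℕ) : ℝ → ℝ := (Set.Ici ((n + 1 : ℕ) : ℝ)).indicator fun x ↦ x ^ (-s - 1)
  have integral_K (n : ℕ) : ∫ x in Set.Ioi (1 : ℝ), K n x = s⁻¹ * ((n + 1 : ℕ) : ℝ) ^ (-s) :=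
    integral_Ioi_one_indicator_Ici_rpow hs (by simp)
  have integrable_K (n : ℕ) : IntegrableOn (K n) (Set.Ioi 1) :=
    (integrableOn_Ioi_rpow_of_lt (by linarith) one_pos).indicator measurableSet_Ici
  have norm_K_smul (n : ℕ) (x : ℝ) (hx : 1 < x) :
      ‖K n x • a (n + 1)‖ = K n x * ‖a (n + 1)‖ := by
    have K_nonneg : 0 ≤ K n x :=
      Set.indicator_apply_nonneg fun _ ↦ rpow_nonneg (one_pos.trans hx).le _
    rw [norm_smul, Real.norm_of_nonneg K_nonneg]
  have summable_norm : Summable fun n ↦ ∫ x in Set.Ioi (1 : ℝ), ‖K n x • a (n + 1)‖ := by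
    refine (((summable_nat_add_iff 1).2 ha).mul_left s⁻¹).congr fun n ↦ ?_
    rw [setIntegral_congr_fun measurableSet_Ioi (norm_K_smul n), integral_mul_const, integral_K,
      mul_assoc]
  have summable_smul : Summable fun n : ℕ ↦ (n : ℝ) ^ (-s) • a n :=
    .of_norm <| ha.congr fun n ↦ by rw [norm_smul, Real.norm_of_nonneg (by positivity)]
  calc ∫ x in Set.Ioi (1 : ℝ), x ^ (-s - 1) • ∑ n ∈ Finset.Icc 1 ⌊x⌋₊, a n
      = ∫ x in Set.Ioi (1 : ℝ), ∑' n, K n x • a (n + 1) :=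
        setIntegral_congr_fun measurableSet_Ioi fun x hx ↦
          (hasSum_indicator_Ici_smul (· ^ (-s - 1)) a (one_pos.trans hx).le).tsum_eq.symm
    _ = ∑' n, ∫ x in Set.Ioi (1 : ℝ), K n x • a (n + 1) :=
        (integral_tsum_of_summable_integral_norm
          (fun n ↦ (integrable_K n).smul_const (a (n + 1))) summable_norm).symm
    _ = ∑' n : ℕ, s⁻¹ • ((n + 1 : ℕ) : ℝ) ^ (-s) • a (n + 1) :=
        tsum_congr fun n ↦ by rw [integral_smul_const, integral_K, mul_smul]
    _ = s⁻¹ • ∑' n : ℕ, (n : ℝ) ^ (-s) • a n := by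
        rw [((summable_nat_add_iff 1).2 summable_smul).tsum_const_smul,
          summable_smul.tsum_eq_zero_add, Nat.cast_zero, zero_rpow (neg_ne_zero.2 hs.ne'),
          zero_smul, zero_add]

lemma vonMangoldt_div_rpow_mul_log_nonneg (σ : ℝ) (n : ℕ) : 0 ≤ Λ n / ((n : ℝ) ^ σ * log n) :=
  div_nonneg ArithmeticFunction.vonMangoldt_nonneg
    (mul_nonneg (by positivity) (log_natCast_nonneg n))

lemma summable_vonMangoldt_div_rpow_mul_log {σ : ℝ} (hσ : 1 < σ) :
    Summable fun n : ℕ ↦ Λ n / ((n : ℝ) ^ σ * log n) := by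
  refine .of_nonneg_of_le (vonMangoldt_div_rpow_mul_log_nonneg σ) (fun n ↦ ?_)
    (Real.summable_nat_rpow_inv.2 hσ)
  rw [mul_comm, ← div_div, div_eq_mul_inv]
  exact mul_le_of_le_one_left (by positivity)
    (div_le_one_of_le₀ ArithmeticFunction.vonMangoldt_le_log (log_natCast_nonneg n))

theorem integral_A1_mul_rpow {s₀ s : ℝ} (hs : 0 < s) (hs₀ : 1 - s₀ < s) :
    ∫ x in Set.Ioi (1 : ℝ), A1 s₀ x * x ^ (-s - 1) =
      (1 / s) * log (riemannZeta ((s + s₀ : ℝ) : ℂ)).re := by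
  have shift (n : ℕ) : (n : ℝ) ^ (-s) * (Λ n / ((n : ℝ) ^ s₀ * log n)) =
      Λ n / ((n : ℝ) ^ (s + s₀) * log n) := by
    rcases n.eq_zero_or_pos with rfl | hn
    · simp
    · rw [rpow_neg n.cast_nonneg, rpow_add (by exact_mod_cast hn)]
      field_simp
  have summable_coeff :
      Summable fun n : ℕ ↦ (n : ℝ) ^ (-s) * ‖Λ n / ((n : ℝ) ^ s₀ * log n)‖ := by
    simp only [Real.norm_of_nonneg (vonMangoldt_div_rpow_mul_log_nonneg s₀ _), shift]
    exact summable_vonMangoldt_div_rpow_mul_log (by linarith)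
  calc ∫ x in Set.Ioi (1 : ℝ), A1 s₀ x * x ^ (-s - 1)
      = s⁻¹ * ∑' n : ℕ, (n : ℝ) ^ (-s) * (Λ n / ((n : ℝ) ^ s₀ * log n)) := by
        simpa only [A1, smul_eq_mul, mul_comm (_ ^ (-s - 1))]
          using integral_rpow_smul_sum_Icc_floor hs summable_coeff
    _ = (1 / s) * log (riemannZeta ((s + s₀ : ℝ) : ℂ)).re := by
        simp only [log_riemannZeta_eq (show 1 < s + s₀ by linarith), shift, one_div]

lemma Ifun_mul_log (c : ℝ) {x : ℝ} (hx : 0 < x) :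
    Ifun (c * log x) = ∫ y in (0 : ℝ)..c, (x ^ y - 1) / y := by
  have substitution := intervalIntegral.mul_integral_comp_mul_right (a := 0) (b := c)
    (f := fun v ↦ (exp v - 1) / v) (c := log x)
  rw [zero_mul] at substitution
  rw [Ifun, ← substitution, ← intervalIntegral.integral_const_mul]
  refine intervalIntegral.integral_congr fun y _ ↦ ?_
  rcases eq_or_ne (log x) 0 with hlog | hlog
  · simp [hlog, rpow_def_of_pos hx]
  · simp only [rpow_def_of_pos hx, mul_comm y]
    field_simp

lemma rpow_sub_one_div_nonneg {x : ℝ} (hx : 1 ≤ x) (y : ℝ) : 0 ≤ (x ^ y - 1) / y := by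
  rcases le_total 0 y with hy | hy
  · exact div_nonneg (sub_nonneg.2 (one_le_rpow hx hy)) hy
  · exact div_nonneg_of_nonpos (sub_nonpos.2 (rpow_le_one_of_one_le_of_nonpos hx hy)) hy

lemma rpow_sub_one_div_mul_rpow {x : ℝ} (hx : 0 < x) (s y : ℝ) :
    (x ^ y - 1) / y * x ^ (-s - 1) = (x ^ (y - s - 1) - x ^ (-s - 1)) / y := by
  rw [show y - s - 1 = y + (-s - 1) by ring, rpow_add hx]
  ring

lemma integrableOn_Ioi_one_rpow_sub_one_div_mul_rpow {s y : ℝ} (hs : 0 < s) (hys : y < s) :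
    IntegrableOn (fun x : ℝ ↦ (x ^ y - 1) / y * x ^ (-s - 1)) (Set.Ioi 1) :=
  IntegrableOn.congr_fun (((integrableOn_Ioi_rpow_of_lt (by linarith) one_pos).sub
    (integrableOn_Ioi_rpow_of_lt (by linarith) one_pos)).div_const y)
    (fun x hx ↦ (rpow_sub_one_div_mul_rpow (one_pos.trans hx) s y).symm) measurableSet_Ioi

lemma integral_Ioi_one_rpow_sub_one_div_mul_rpow {s y : ℝ} (hs : 0 < s) (hys : y < s)
    (hy : y ≠ 0) :
    ∫ x in Set.Ioi (1 : ℝ), (x ^ y - 1) / y * x ^ (-s - 1) = s⁻¹ * (s - y)⁻¹ := by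
  rw [setIntegral_congr_fun measurableSet_Ioi
      fun x hx ↦ rpow_sub_one_div_mul_rpow (one_pos.trans hx) s y,
    integral_div, integral_sub (integrableOn_Ioi_rpow_of_lt (by linarith) one_pos)
      (integrableOn_Ioi_rpow_of_lt (by linarith) one_pos),
    integral_Ioi_rpow_of_lt (by linarith) one_pos, integral_Ioi_rpow_of_lt (by linarith) one_pos,
    one_rpow, one_rpow, sub_add_cancel, sub_add_cancel]
  have : y - s ≠ 0 := by linarith
  have : s - y ≠ 0 := by linarith
  field_simp
  ring

lemma integral_inv_const_sub {a b s : ℝ} (ha : a < s) (hb : b < s) :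
    ∫ y in a..b, (s - y)⁻¹ = log ((s - a) / (s - b)) := by
  rw [intervalIntegral.integral_comp_sub_left (fun y ↦ y⁻¹) s,
    integral_inv_of_pos (sub_pos.2 hb) (sub_pos.2 ha)]

lemma intervalIntegrable_inv_const_sub {a b s : ℝ} (ha : a < s) (hb : b < s) :
    IntervalIntegrable (fun y ↦ (s - y)⁻¹) volume a b :=
  intervalIntegral.intervalIntegrable_inv
    (fun _ hy ↦ (sub_pos.2 (hy.2.trans_lt (max_lt ha hb))).ne') (by fun_prop)

section MellinTransformIfun

variable {c s : ℝ}

lemma integrable_rpow_sub_one_div_mul_rpow_prod (hs : 0 < s) (hcs : c < s) :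
    Integrable (Function.uncurry fun y x : ℝ ↦ (x ^ y - 1) / y * x ^ (-s - 1))
      ((volume.restrict (Set.uIoc 0 c)).prod (volume.restrict (Set.Ioi 1))) := by
  have measurable_kernel :
      Measurable (Function.uncurry fun y x : ℝ ↦ (x ^ y - 1) / y * x ^ (-s - 1)) := by
    unfold Function.uncurry
    fun_prop
  have lt_s : ∀ᵐ y ∂volume.restrict (Set.uIoc 0 c), y < s :=
    ae_restrict_of_forall_mem measurableSet_uIoc fun y hy ↦ hy.2.trans_lt (max_lt hs hcs)
  have ne_zero : ∀ᵐ y ∂volume.restrict (Set.uIoc 0 c), y ≠ 0 :=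
    ae_restrict_of_ae (Measure.ae_ne volume 0)
  refine (integrable_prod_iff measurable_kernel.aestronglyMeasurable).2 ⟨?_, ?_⟩
  · filter_upwards [lt_s] with y hys
    exact integrableOn_Ioi_one_rpow_sub_one_div_mul_rpow hs hys
  · have integrable_transform : IntegrableOn (fun y ↦ s⁻¹ * (s - y)⁻¹) (Set.uIoc 0 c) :=
      (intervalIntegrable_inv_const_sub hs hcs).def'.const_mul s⁻¹
    refine integrable_transform.congr ?_
    filter_upwards [lt_s, ne_zero] with y hys hy
    rw [← integral_Ioi_one_rpow_sub_one_div_mul_rpow hs hys hy]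
    refine setIntegral_congr_fun measurableSet_Ioi fun x (hx : 1 < x) ↦ ?_
    exact (Real.norm_of_nonneg (mul_nonneg (rpow_sub_one_div_nonneg hx.le y)
      (rpow_nonneg (one_pos.trans hx).le _))).symm

theorem integral_Ifun_mul_log_mul_rpow (hs : 0 < s) (hcs : c < s) :
    ∫ x in Set.Ioi (1 : ℝ), Ifun (c * log x) * x ^ (-s - 1) =
      (1 / s) * log (s / (s - c)) := by
  calc ∫ x in Set.Ioi (1 : ℝ), Ifun (c * log x) * x ^ (-s - 1)
      = ∫ x in Set.Ioi (1 : ℝ), ∫ y in (0 : ℝ)..c, (x ^ y - 1) / y * x ^ (-s - 1) :=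
        setIntegral_congr_fun measurableSet_Ioi fun x hx ↦ by
          simp only [Ifun_mul_log c (one_pos.trans hx), intervalIntegral.integral_mul_const]
    _ = ∫ y in (0 : ℝ)..c, ∫ x in Set.Ioi (1 : ℝ), (x ^ y - 1) / y * x ^ (-s - 1) :=
        (intervalIntegral_integral_swap (integrable_rpow_sub_one_div_mul_rpow_prod hs hcs)).symm
    _ = ∫ y in (0 : ℝ)..c, s⁻¹ * (s - y)⁻¹ := by
        refine intervalIntegral.integral_congr_ae ?_
        filter_upwards [Measure.ae_ne volume 0] with y hy hyc
        exact integral_Ioi_one_rpow_sub_one_div_mul_rpow hs (hyc.2.trans_lt (max_lt hs hcs)) hy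
    _ = (1 / s) * log (s / (s - c)) := by
        rw [intervalIntegral.integral_const_mul, integral_inv_const_sub hs hcs, sub_zero, one_div]

end MellinTransformIfun

theorem stmt16_general {s₀ s : ℝ} (hs : 0 < s) (hs₀ : 1 - s₀ < s) :
    (∫ x in Set.Ioi (1 : ℝ), A1 s₀ x * x ^ (-s - 1)) =
        (1 / s) * Real.log ((riemannZeta ((s + s₀ : ℝ) : ℂ)).re) ∧
      (∫ x in Set.Ioi (1 : ℝ), A2 s₀ x * x ^ (-s - 1)) =
        (1 / s) * Real.log (s / (s + s₀ - 1)) := by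
  refine ⟨integral_A1_mul_rpow hs hs₀, ?_⟩
  rw [show s + s₀ - 1 = s - (1 - s₀) by ring]
  exact integral_Ifun_mul_log_mul_rpow hs hs₀

/-- Mellin transform computations: for fixed `s₀ ∈ (0,1)` and real `s > 1 - s₀`,
`∫₁^∞ A₁(x) x^{-s-1} dx = (1/s) log ζ(s+s₀)` and
`∫₁^∞ A₂(x) x^{-s-1} dx = (1/s) log(s/(s+s₀-1))`. -/
theorem stmt16 (s₀ : ℝ) (hs₀0 : 0 < s₀) (hs₀1 : s₀ < 1) :
    ∀ s : ℝ, 1 - s₀ < s →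
      (∫ x in Set.Ioi (1 : ℝ), A1 s₀ x * x ^ (-s - 1)) =
        (1 / s) * Real.log ((riemannZeta ((s + s₀ : ℝ) : ℂ)).re) ∧
      (∫ x in Set.Ioi (1 : ℝ), A2 s₀ x * x ^ (-s - 1)) =
        (1 / s) * Real.log (s / (s + s₀ - 1)) := by
  exact fun s hs ↦ stmt16_general (by linarith) hs
end
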